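/- arXiv:1810.01255 — 2 statements merged into one kernel-verified Lean document; each statement's English description precedes it below -/
import Mathlib

section
/- Let C : ℕ → ℝ² satisfy: (i) ⋃ₙ closedBall(C n, 1) = ℝ²; (ii) for every n ≥ 1, 0 < dist(C n, C (n−1)) ≤ 1 (each disk contains the center of the next disk); and (iii) for every n ≥ 1, the undirected Euclidean angle ∠ C(n−1) C(n) C(n+1) is at least 2π/3. Then liminf_{λ→∞} N_C(λ)·π/(4λ²) ≥ 2π/(2+√3), where the liminf is computed in the extended nonnegative reals. -/
open Metric MeasureTheory Filter Real
open scoped ENNReal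
noncomputable section

/-- The Euclidean plane. -/
abbrev Pt := EuclideanSpace ℝ (Fin 2)

/-- The open square `(−λ,λ) × (−λ,λ)`. -/
def openSquare (l : ℝ) : Set Pt := {p | |p 0| < l ∧ |p 1| < l}

/-- `N_C(λ)`: the extended number of indices `i` such that the closed unit ball centered at
`C i` meets the open square `(−λ,λ) × (−λ,λ)`. -/
def Ncount {ι : Type*} (C : ι → Pt) (l : ℝ) : ℝ≥0∞ :=
  ({i | (closedBall (C i) 1 ∩ openSquare l).Nonempty}.encard : ℕ∞)

/-- The lower density `liminf_{λ→∞} N_C(λ)·π/(4λ²)` of the family of unit disks centered at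
the points `C i`, computed in `ℝ≥0∞`. -/
def lowerDensity {ι : Type*} (C : ι → Pt) : ℝ≥0∞ :=
  Filter.liminf (fun l : ℝ => Ncount C l * ENNReal.ofReal π / ENNReal.ofReal (4 * l ^ 2))
    Filter.atTop

section

/-- intercept of the tangent line to `sin x / 2` at `π/6` -/
def bb : ℝ := 1/4 - √3 * π / 24
def kk : ℝ := 1 - 4 * bb / √3

lemma sqrt3_sq : √3 * √3 = 3 := Real.mul_self_sqrt (by norm_num)
lemma sqrt3_pos : 0 < √3 := by positivity
lemma sqrt3_lt : √3 < 1.7321 := by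
  rw [Real.sqrt_lt' (by norm_num)]; norm_num
lemma sqrt3_gt : 1.732 < √3 := by
  apply Real.lt_sqrt_of_sq_lt; norm_num

lemma bb_pos : 0 < bb := by
  unfold bb
  have := Real.pi_lt_d2
  have := Real.pi_pos
  nlinarith [sqrt3_lt, sqrt3_pos]

lemma bb_lt : bb < 1/4 := by
  unfold bb
  have := Real.pi_pos
  have : 0 < √3 * π := by positivity
  linarith

lemma kk_eq : kk * √3 = √3 - 4 * bb := by
  unfold kk
  have := sqrt3_pos
  field_simp

lemma kk_pos : 0 < kk := by
  have h := kk_eq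
  have := sqrt3_pos
  have h2 : 0 < kk * √3 := by rw [h]; linarith [bb_lt, sqrt3_gt]
  by_contra hh
  push Not at hh
  nlinarith

lemma kk_lt : kk < 1 := by
  have h := kk_eq
  have := sqrt3_pos
  nlinarith [bb_pos]

/-- angular density -/
def gg (a a' s : ℝ) : ℝ :=
  if 1/2 < cos (s - a) then kk / (8 * cos (s - a) ^ 2)
  else if 1/2 < cos (s - a') then kk / (8 * cos (s - a') ^ 2)
  else √3 / 4

lemma gg_meas (a a' : ℝ) : Measurable (gg a a') := by
  unfold gg
  refine Measurable.ite (measurableSet_lt measurable_const (by fun_prop)) (by fun_prop) ?_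
  exact Measurable.ite (measurableSet_lt measurable_const (by fun_prop)) (by fun_prop) (by fun_prop)

lemma gg_aux {c : ℝ} (h : 1/2 < c) : 0 < kk / (8 * c ^ 2) ∧ kk / (8 * c ^ 2) ≤ 1 := by
  have h1 : 1/4 < c^2 := by nlinarith
  have := kk_pos
  have := kk_lt
  constructor
  · positivity
  · rw [div_le_one (by positivity)]; nlinarith

lemma gg_bd (a a' s : ℝ) : 0 < gg a a' s ∧ gg a a' s ≤ 1 := by
  unfold gg
  split_ifs with h1 h2
  · exact gg_aux h1
  · exact gg_aux h2
  · constructor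
    · positivity
    · linarith [sqrt3_lt]

lemma gg_int (a a' s t : ℝ) : IntervalIntegrable (gg a a') volume s t := by
  refine IntervalIntegrable.mono_fun (f := fun _ => (1:ℝ)) intervalIntegrable_const
    (gg_meas a a').aestronglyMeasurable ?_
  refine Eventually.of_forall fun x => ?_
  have := gg_bd a a' x
  simp only [norm_eq_abs, abs_one]
  rw [abs_of_pos this.1]; exact this.2

lemma gg_per (a a' : ℝ) : Function.Periodic (gg a a') (2 * π) := by
  intro s
  unfold gg
  have h : ∀ b, cos (s + 2 * π - b) = cos (s - b) := by
    intro b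
    rw [show s + 2 * π - b = (s - b) + 2 * π by ring, Real.cos_add_two_pi]
  rw [h, h]

def Peak (a a' τ : ℝ) : Prop := ∃ n : ℤ, τ = a + n * (2 * π) ∨ τ = a' + n * (2 * π)

def Gap (a a' s : ℝ) : Prop := cos (s - a) ≤ 1/2 ∧ cos (s - a') ≤ 1/2

lemma cos_shift (s a : ℝ) (n : ℤ) : cos (s - (a + n * (2 * π))) = cos (s - a) := by
  rw [show s - (a + n * (2 * π)) = (s - a) - n * (2 * π) by ring, Real.cos_sub_int_mul_two_pi]

lemma half_lt_cos {y : ℝ} (h : |y| < π / 3) : 1/2 < cos y := by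
  rw [← Real.cos_abs, ← Real.cos_pi_div_three]
  exact Real.cos_lt_cos_of_nonneg_of_le_pi_div_two (abs_nonneg _) (by linarith [Real.pi_pos]) h

lemma exists_round (s a : ℝ) : ∃ n : ℤ, |s - (a + n * (2*π))| ≤ π := by
  have hp := Real.pi_pos
  refine ⟨round ((s - a) / (2 * π)), ?_⟩
  have := abs_sub_round ((s - a) / (2 * π))
  have h2 : s - (a + (round ((s - a) / (2 * π)) : ℝ) * (2*π)) = ((s - a) / (2 * π) - round ((s - a) / (2 * π))) * (2 * π) := by
    field_simp; ring
  rw [h2, abs_mul, abs_of_pos (show 0 < 2 * π by positivity)]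
  nlinarith

lemma exists_lift (s a : ℝ) (h : 1/2 < cos (s - a)) : ∃ n : ℤ, |s - (a + n * (2 * π))| < π / 3 := by
  have hp := Real.pi_pos
  obtain ⟨n, hn⟩ := exists_round s a
  refine ⟨n, ?_⟩
  rw [← cos_shift s a n, ← Real.cos_abs] at h
  by_contra hh
  push Not at hh
  have := Real.cos_le_cos_of_nonneg_of_le_pi (by positivity) hn hh
  rw [Real.cos_pi_div_three] at this
  linarith

lemma cos_disj {a a' : ℝ} (h : cos (a - a') ≤ -1/2) {s : ℝ} (h1 : 1/2 ≤ cos (s - a)) :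
    cos (s - a') ≤ 1/2 := by
  have e : a - a' = (s - a') - (s - a) := by ring
  rw [e, Real.cos_sub] at h
  have p1 := Real.sin_sq_add_cos_sq (s - a)
  have p2 := Real.sin_sq_add_cos_sq (s - a')
  set c := cos (s - a)
  set c' := cos (s - a')
  set d := sin (s - a)
  set d' := sin (s - a')
  by_contra hh
  push Not at hh
  nlinarith [sq_nonneg (d + d')]

lemma gap_or_peak (a a' s : ℝ) : Gap a a' s ∨ ∃ τ, Peak a a' τ ∧ |s - τ| < π / 3 := by
  by_cases h1 : 1/2 < cos (s - a)
  · obtain ⟨n, hn⟩ := exists_lift s a h1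
    exact Or.inr ⟨_, ⟨n, Or.inl rfl⟩, hn⟩
  by_cases h2 : 1/2 < cos (s - a')
  · obtain ⟨n, hn⟩ := exists_lift s a' h2
    exact Or.inr ⟨_, ⟨n, Or.inr rfl⟩, hn⟩
  exact Or.inl ⟨by linarith, by linarith⟩

lemma gap_not_peak {a a' s τ : ℝ} (hs : Gap a a' s) (hτ : Peak a a' τ) : π / 3 ≤ |s - τ| := by
  by_contra hh
  push Not at hh
  have := half_lt_cos hh
  obtain ⟨n, rfl | rfl⟩ := hτ
  · rw [cos_shift] at this; linarith [hs.1]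
  · rw [cos_shift] at this; linarith [hs.2]

lemma peak_gg {a a' s τ : ℝ} (h : cos (a - a') ≤ -1/2) (hτ : Peak a a' τ) (hs : |s - τ| < π / 3) :
    gg a a' s = kk / (8 * cos (s - τ) ^ 2) := by
  have := half_lt_cos hs
  obtain ⟨n, rfl | rfl⟩ := hτ
  · rw [cos_shift] at this ⊢
    unfold gg; rw [if_pos this]
  · rw [cos_shift] at this ⊢
    have h' : cos (a' - a) ≤ -1/2 := by rwa [← Real.cos_neg, neg_sub]
    have := cos_disj h' this.le
    unfold gg; rw [if_neg (by linarith), if_pos (by linarith)]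

lemma peak_gap {a a' τ : ℝ} (h : cos (a - a') ≤ -1/2) (hτ : Peak a a' τ) {s : ℝ}
    (hs : |s - τ| = π / 3) : Gap a a' s := by
  have : cos (s - τ) = 1/2 := by rw [← Real.cos_abs, hs, Real.cos_pi_div_three]
  obtain ⟨n, rfl | rfl⟩ := hτ
  · rw [cos_shift] at this
    exact ⟨this.le, cos_disj h this.ge⟩
  · rw [cos_shift] at this
    have h' : cos (a' - a) ≤ -1/2 := by rwa [← Real.cos_neg, neg_sub]
    exact ⟨cos_disj h' this.ge, this.le⟩

lemma peak_int {a a' τ : ℝ} (h : cos (a - a') ≤ -1/2) (hτ : Peak a a' τ) {s t : ℝ}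
    (h1 : τ - π/3 ≤ s) (hst : s ≤ t) (h2 : t ≤ τ + π/3) :
    ∫ u in s..t, gg a a' u = kk / 8 * (tan (t - τ) - tan (s - τ)) := by
  have hp := Real.pi_pos
  have hc : ∀ u ∈ Set.uIcc s t, 0 < cos (u - τ) := by
    intro u hu
    rw [Set.uIcc_of_le hst] at hu
    exact Real.cos_pos_of_mem_Ioo ⟨by linarith [hu.1], by linarith [hu.2]⟩
  have e : ∫ u in s..t, gg a a' u = ∫ u in s..t, kk / (8 * cos (u - τ) ^ 2) := by
    apply intervalIntegral.integral_congr_Ioo_of_le hst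
    intro u hu
    exact peak_gg h hτ (by rw [abs_lt]; constructor <;> linarith [hu.1, hu.2])
  rw [e]
  rw [intervalIntegral.integral_eq_sub_of_hasDerivAt (f := fun u => kk / 8 * tan (u - τ))]
  · ring
  · intro u hu
    have hu := hc u hu
    have h3 := ((Real.hasDerivAt_tan hu.ne').comp u ((hasDerivAt_id u).sub_const τ)).const_mul (kk/8)
    refine h3.congr_deriv ?_
    have h4 : cos (id u - τ) = cos (u - τ) := rfl
    simp only [id, mul_one, one_div] at *
    field_simp
  · apply ContinuousOn.intervalIntegrable
    apply ContinuousOn.div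
    · fun_prop
    · fun_prop
    · intro u hu
      have := hc u hu
      positivity

lemma gap_gg {a a' s : ℝ} (hs : Gap a a' s) : gg a a' s = √3 / 4 := by
  unfold gg
  rw [if_neg (not_lt.mpr hs.1), if_neg (not_lt.mpr hs.2)]

lemma gap_int {a a' s t : ℝ} (hst : s ≤ t) (h : ∀ u ∈ Set.Ioo s t, Gap a a' u) :
    ∫ u in s..t, gg a a' u = √3 / 4 * (t - s) := by
  have : ∫ u in s..t, gg a a' u = ∫ u in s..t, √3 / 4 := by
    apply intervalIntegral.integral_congr_Ioo_of_le hst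
    intro u hu
    exact gap_gg (h u hu)
  rw [this]; simp; ring

lemma sin_tangent {θ : ℝ} (h : 0 ≤ θ) : sin θ / 2 ≤ bb + √3 / 4 * θ := by
  obtain ⟨y, rfl⟩ : ∃ y, θ = y + π / 6 := ⟨θ - π/6, by ring⟩
  rw [Real.sin_add, Real.cos_pi_div_six, Real.sin_pi_div_six]
  unfold bb
  suffices cos y + √3 * sin y ≤ 1 + √3 * y by nlinarith
  have h3 := sqrt3_pos
  rcases le_or_gt 0 y with hy | hy
  · have := Real.sin_le hy
    have := Real.cos_le_one y
    nlinarith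
  · have hp := Real.pi_lt_d2
    obtain ⟨z, rfl⟩ : ∃ z, y = -z := ⟨-y, by ring⟩
    have hz : 0 < z := by linarith
    have hz2 : z < 0.53 := by linarith
    rw [Real.cos_neg, Real.sin_neg]
    have hza : |z| ≤ 1 := by rw [abs_of_pos hz]; linarith
    have h1 := (abs_le.mp (Real.cos_bound hza)).2
    have h2 := (abs_le.mp (Real.sin_bound hza)).1
    rw [abs_of_pos hz] at h1 h2
    have h4 := sqrt3_lt
    suffices √3 * (z - sin z) ≤ 1 - cos z by nlinarith
    have h5' : z^5 ≤ z^4 := pow_le_pow_of_le_one hz.le (by linarith) (by norm_num)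
    have h5 : z - sin z ≤ z^3/6 + z^4*(5/96) := by nlinarith [pow_pos hz 4]
    have h6 : √3 * (z - sin z) ≤ √3 * (z^3/6 + z^4*(5/96)) := by gcongr
    have h7 : √3 * (z^3/6 + z^4*(5/96)) ≤ 1.7321 * (z^3/6 + z^4*(5/96)) := by gcongr
    have h8 : z^2/2 - z^4*(5/96) ≤ 1 - cos z := by linarith
    have h9 : z^3 ≤ 0.53 * z^2 := by nlinarith [sq_nonneg z]
    have h10 : z^4 ≤ 0.53 * 0.53 * z^2 := by nlinarith [sq_nonneg z]
    nlinarith [sq_nonneg z]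

lemma cos_le_half {y : ℝ} (h1 : π / 3 ≤ y) (h2 : y ≤ 5 * π / 3) : cos y ≤ 1/2 := by
  have hp := Real.pi_pos
  rw [← Real.cos_pi_div_three]
  rcases le_or_gt y π with h | h
  · exact Real.cos_le_cos_of_nonneg_of_le_pi (by positivity) h h1
  · rw [← Real.cos_two_pi_sub]
    exact Real.cos_le_cos_of_nonneg_of_le_pi (by positivity) (by linarith) (by linarith)

/-- total mass of the angular density -/
def TT : ℝ := kk * √3 / 2 + √3 * π / 6

lemma TT_eq : TT + 6 * bb = 1 + √3 / 2 := by
  unfold TT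
  rw [kk_eq]; unfold bb; ring

lemma TT_pos : 0 < TT := by
  unfold TT
  have := kk_pos
  positivity

lemma gg_total {a a' : ℝ} (h : cos (a - a') ≤ -1/2) : ∫ u in (-π)..π, gg a a' u = TT := by
  have hp := Real.pi_pos
  have e : ∫ u in (-π)..π, gg a a' u = ∫ u in (a - π/3)..(a - π/3 + 2 * π), gg a a' u := by
    rw [← (gg_per a a').intervalIntegral_add_eq (-π) (a - π/3)]
    congr 1; ring
  -- a lift of a'
  obtain ⟨n, hn⟩ := exists_round (a + π) a'
  set τ := a' + n * (2 * π) with hτ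
  have hc : cos (τ - a) ≤ -1/2 := by
    rw [← Real.cos_neg, neg_sub, cos_shift]; exact h
  rw [abs_le] at hn
  have c23 : cos (2 * π / 3) = -1/2 := by
    rw [show 2 * π / 3 = π - π / 3 by ring, Real.cos_pi_sub, Real.cos_pi_div_three]; norm_num
  have b1 : 2 * π / 3 ≤ τ - a := by
    by_contra hh
    push Not at hh
    have := Real.cos_lt_cos_of_nonneg_of_le_pi (by linarith : 0 ≤ τ - a) (by linarith) hh
    linarith
  have b2 : τ - a ≤ 4 * π / 3 := by
    by_contra hh
    push Not at hh
    have := Real.cos_lt_cos_of_nonneg_of_le_pi (by linarith : 0 ≤ 2 * π - (τ - a)) (y := 2 * π / 3)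
      (by linarith) (by linarith)
    rw [Real.cos_two_pi_sub] at this
    linarith
  have pk1 : Peak a a' a := ⟨0, Or.inl (by simp)⟩
  have pk2 : Peak a a' τ := ⟨n, Or.inr rfl⟩
  have i1 := peak_int h pk1 (s := a - π/3) (t := a + π/3) le_rfl (by linarith) le_rfl
  have i2 := peak_int h pk2 (s := τ - π/3) (t := τ + π/3) le_rfl (by linarith) le_rfl
  have i3 : ∫ u in (a + π/3)..(τ - π/3), gg a a' u = √3 / 4 * ((τ - π/3) - (a + π/3)) := by
    apply gap_int (by linarith)
    intro u hu
    refine ⟨cos_le_half (by linarith [hu.1]) (by linarith [hu.2]), ?_⟩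
    rw [← cos_shift u a' n, ← Real.cos_neg]
    exact cos_le_half (by linarith [hu.2]) (by linarith [hu.1])
  have i4 : ∫ u in (τ + π/3)..(a - π/3 + 2 * π), gg a a' u = √3 / 4 * ((a - π/3 + 2 * π) - (τ + π/3)) := by
    apply gap_int (by linarith)
    intro u hu
    refine ⟨cos_le_half (by linarith [hu.1]) (by linarith [hu.2]), ?_⟩
    rw [← cos_shift u a' n]
    exact cos_le_half (by linarith [hu.1]) (by linarith [hu.2])
  have j1 := intervalIntegral.integral_add_adjacent_intervals (gg_int a a' (a - π/3) (a + π/3))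
    (gg_int a a' (a + π/3) (τ - π/3))
  have j2 := intervalIntegral.integral_add_adjacent_intervals (gg_int a a' (a - π/3) (τ - π/3))
    (gg_int a a' (τ - π/3) (τ + π/3))
  have j3 := intervalIntegral.integral_add_adjacent_intervals (gg_int a a' (a - π/3) (τ + π/3))
    (gg_int a a' (τ + π/3) (a - π/3 + 2 * π))
  rw [e, ← j3, ← j2, ← j1, i1, i2, i3, i4]
  have t1 : ∀ x : ℝ, tan (x + π / 3 - x) = √3 := by
    intro x; rw [add_sub_cancel_left, Real.tan_pi_div_three]
  have t2 : ∀ x : ℝ, tan (x - π / 3 - x) = -√3 := by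
    intro x; rw [show x - π / 3 - x = -(π/3) by ring, Real.tan_neg, Real.tan_pi_div_three]
  rw [t1, t2, t1, t2]
  unfold TT; ring

lemma gg_mono_int (a a' : ℝ) {s s' t t' : ℝ} (h1 : s ≤ s') (h2 : s' ≤ t') (h3 : t' ≤ t) :
    ∫ u in s'..t', gg a a' u ≤ ∫ u in s..t, gg a a' u :=
  intervalIntegral.integral_mono_interval h1 h2 h3
    (Eventually.of_forall fun u => (gg_bd a a' u).1.le) (gg_int a a' s t)

lemma gg_int_nonneg (a a' : ℝ) {s t : ℝ} (h : s ≤ t) : 0 ≤ ∫ u in s..t, gg a a' u :=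
  intervalIntegral.integral_nonneg h fun u _ => (gg_bd a a' u).1.le

lemma tan_R (x : ℝ) : tan (x + π / 3 - x) = √3 := by
  rw [add_sub_cancel_left, Real.tan_pi_div_three]
lemma tan_L (x : ℝ) : tan (x - π / 3 - x) = -√3 := by
  rw [show x - π / 3 - x = -(π/3) by ring, Real.tan_neg, Real.tan_pi_div_three]

/-- both endpoints in gaps -/
lemma side_gap {a a' : ℝ} (h : cos (a - a') ≤ -1/2) {t t' : ℝ} (htt : t ≤ t') (ht2 : t' ≤ t + 2 * π)
    (g1 : Gap a a' t) (g2 : Gap a a' t') : sin (t' - t) / 2 ≤ bb + ∫ u in t..t', gg a a' u := by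
  have hp := Real.pi_pos
  by_cases hall : ∀ u ∈ Set.Ioo t t', Gap a a' u
  · rw [gap_int htt hall]
    exact sin_tangent (by linarith)
  · push Not at hall
    obtain ⟨u, hu, hug⟩ := hall
    obtain h1 | ⟨τ, hτ, hut⟩ := gap_or_peak a a' u
    · exact absurd h1 hug
    have l1 : t ≤ τ - π / 3 := by
      have := gap_not_peak g1 hτ
      rw [abs_lt] at hut
      rcases le_abs.mp this with h | h <;> linarith [hu.1]
    have l2 : τ + π / 3 ≤ t' := by
      have := gap_not_peak g2 hτ
      rw [abs_lt] at hut
      rcases le_abs.mp this with h | h <;> linarith [hu.2]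
    have i1 := gg_mono_int a a' l1 (by linarith : τ - π/3 ≤ τ + π/3) l2
    rw [peak_int h hτ le_rfl (by linarith) le_rfl, tan_R, tan_L] at i1
    have hs : sin (t' - t) ≤ √3 / 2 := by
      rcases le_or_gt (t' - t) π with hh | hh
      · have h1 : cos (π / 2 - (t' - t)) ≤ cos (π / 6) := by
          rw [← Real.cos_abs (π/2 - (t' - t))]
          apply Real.cos_le_cos_of_nonneg_of_le_pi (by positivity)
          · rw [abs_le]; constructor <;> linarith
          · rw [le_abs]; right; linarith
        rwa [Real.cos_pi_div_two_sub, Real.cos_pi_div_six] at h1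
      · have h1 : sin (t' - t) ≤ 0 := by
          have h2 := Real.sin_nonneg_of_nonneg_of_le_pi (x := t' - t - π) (by linarith) (by linarith)
          rw [Real.sin_sub_pi] at h2; linarith
        have := sqrt3_pos
        linarith
    have := kk_eq
    nlinarith

/-- radial constraint -/
def Rad (a a' t ρ : ℝ) : Prop := 0 ≤ ρ ∧ ρ ≤ 1 ∧ ρ * cos (t - a) ≤ 1/2 ∧ ρ * cos (t - a') ≤ 1/2

lemma rad_peak {a a' t ρ τ : ℝ} (hr : Rad a a' t ρ) (hτ : Peak a a' τ) : ρ * cos (t - τ) ≤ 1/2 := by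
  obtain ⟨n, rfl | rfl⟩ := hτ
  · rw [cos_shift]; exact hr.2.2.1
  · rw [cos_shift]; exact hr.2.2.2

/-- chord interpolation: with `f = (tan y + √3)/(2√3)` -/
lemma chord_interp {y z : ℝ} (hy : 0 < cos y) :
    sin (y - z) / (2 * cos y) = (1 - (tan y + √3) / (2 * √3)) * sin (-(π/3) - z)
      + (tan y + √3) / (2 * √3) * sin (π / 3 - z) := by
  rw [Real.tan_eq_sin_div_cos, Real.sin_sub, Real.sin_sub, Real.sin_sub, Real.cos_neg, Real.sin_neg,
    Real.cos_pi_div_three, Real.sin_pi_div_three]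
  have := sqrt3_pos
  field_simp
  ring_nf

lemma peak_f {y : ℝ} (h : |y| < π / 3) : 0 ≤ (tan y + √3) / (2 * √3) ∧ (tan y + √3) / (2 * √3) ≤ 1 := by
  have hp := Real.pi_pos
  have h3 := sqrt3_pos
  rw [abs_lt] at h
  have h1 : tan (-(π/3)) < tan y := Real.tan_lt_tan_of_lt_of_lt_pi_div_two (by linarith) (by linarith) (by linarith)
  have h2 : tan y < tan (π/3) := Real.tan_lt_tan_of_lt_of_lt_pi_div_two (by linarith) (by linarith) (by linarith)
  rw [Real.tan_neg] at h1
  rw [Real.tan_pi_div_three] at h1 h2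
  constructor
  · apply div_nonneg <;> linarith
  · rw [div_le_one (by positivity)]; linarith

lemma side_left_gap {a a' : ℝ} (h : cos (a - a') ≤ -1/2) {t t' ρ' : ℝ} (htt : t ≤ t')
    (ht2 : t' ≤ t + 2 * π) (g1 : Gap a a' t) (r2 : Rad a a' t' ρ') :
    ρ' * sin (t' - t) / 2 ≤ bb + ∫ u in t..t', gg a a' u := by
  have hp := Real.pi_pos
  have hb := bb_pos
  have hnn := gg_int_nonneg a a' htt
  rcases le_or_gt (sin (t' - t)) 0 with hs | hs
  · have := mul_nonneg r2.1 (neg_nonneg.mpr hs)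
    nlinarith
  have hpi : t' < t + π := by
    by_contra hh
    push Not at hh
    have h2 := Real.sin_nonneg_of_nonneg_of_le_pi (x := t' - t - π) (by linarith) (by linarith)
    rw [Real.sin_sub_pi] at h2; linarith
  obtain g2 | ⟨τ, hτ, hut⟩ := gap_or_peak a a' t'
  · have := side_gap h htt ht2 g1 g2
    have : ρ' * sin (t' - t) ≤ sin (t' - t) := mul_le_of_le_one_left hs.le r2.2.1
    linarith
  have hf := peak_f hut
  have hcos := half_lt_cos hut
  have hci := chord_interp (y := t' - τ) (z := t - τ) (by linarith)
  set f := (tan (t' - τ) + √3) / (2 * √3) with hfdef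
  have hut' := abs_lt.mp hut
  have l1 : t ≤ τ - π / 3 := by
    have := gap_not_peak g1 hτ
    rcases le_abs.mp this with h | h <;> linarith
  have gL : Gap a a' (τ - π/3) := peak_gap h hτ (by
    rw [show τ - π/3 - τ = -(π/3) by ring, abs_neg, abs_of_pos (by positivity)])
  have gR : Gap a a' (τ + π/3) := peak_gap h hτ (by
    rw [add_sub_cancel_left, abs_of_pos (by positivity)])
  have sL := side_gap h l1 (by linarith) g1 gL
  have sR := side_gap h (by linarith : t ≤ τ + π/3) (by linarith) g1 gR
  rw [show t' - τ - (t - τ) = t' - t by ring, show -(π/3) - (t - τ) = τ - π/3 - t by ring,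
    show π/3 - (t - τ) = τ + π/3 - t by ring] at hci
  have hrc := rad_peak r2 hτ
  have hle : ρ' * sin (t' - t) ≤ sin (t' - t) / (2 * cos (t' - τ)) := by
    rw [le_div_iff₀ (by positivity)]
    nlinarith
  rw [hci] at hle
  have k1 := peak_int h hτ (s := τ - π/3) (t := t') le_rfl (by linarith) (by linarith)
  have k2 := peak_int h hτ (s := τ - π/3) (t := τ + π/3) le_rfl (by linarith) le_rfl
  have j1 := intervalIntegral.integral_add_adjacent_intervals (gg_int a a' t (τ - π/3))
    (gg_int a a' (τ - π/3) t')
  have j2 := intervalIntegral.integral_add_adjacent_intervals (gg_int a a' t (τ - π/3))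
    (gg_int a a' (τ - π/3) (τ + π/3))
  rw [tan_L] at k1 k2
  rw [tan_R] at k2
  have hft : tan (t' - τ) + √3 = f * (2 * √3) := by
    rw [hfdef]; field_simp
  have m1 := mul_le_mul_of_nonneg_left sL (sub_nonneg.mpr hf.2)
  have m2 := mul_le_mul_of_nonneg_left sR hf.1
  rw [← j1, k1]
  rw [← j2, k2] at m2
  have : kk / 8 * (tan (t' - τ) - -√3) = f * (kk / 8 * (√3 - -√3)) := by
    rw [sub_neg_eq_add, hft]; ring
  rw [this]
  nlinarith

lemma side_ineq {a a' : ℝ} (h : cos (a - a') ≤ -1/2) {t t' ρ ρ' : ℝ} (htt : t ≤ t')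
    (ht2 : t' ≤ t + π) (r1 : Rad a a' t ρ) (r2 : Rad a a' t' ρ') :
    ρ * ρ' * sin (t' - t) / 2 ≤ bb + ∫ u in t..t', gg a a' u := by
  have hp := Real.pi_pos
  have hb := bb_pos
  have h3 := sqrt3_pos
  have hnn := gg_int_nonneg a a' htt
  have hs := Real.sin_nonneg_of_nonneg_of_le_pi (x := t' - t) (by linarith) (by linarith)
  have hs' : 0 ≤ ρ' * sin (t' - t) := mul_nonneg r2.1 hs
  obtain g1 | ⟨τ, hτ, hut⟩ := gap_or_peak a a' t
  · have := side_left_gap h htt (by linarith) g1 r2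
    have : ρ * (ρ' * sin (t' - t)) ≤ ρ' * sin (t' - t) := mul_le_of_le_one_left hs' r1.2.1
    linarith
  have hf := peak_f hut
  have hcos := half_lt_cos hut
  have hut' := abs_lt.mp hut
  have hrc := rad_peak r1 hτ
  rcases lt_or_ge t' (τ + π/3) with hc | hc
  · -- same chord
    have hut2 : |t' - τ| < π/3 := by rw [abs_lt]; constructor <;> linarith
    have hf2 := peak_f hut2
    have hcos2 := half_lt_cos hut2
    have hrc2 := rad_peak r2 hτ
    rw [peak_int h hτ (by linarith) htt hc.le]
    have e1 : tan (t' - τ) - tan (t - τ) = sin (t' - t) / (cos (t' - τ) * cos (t - τ)) := by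
      rw [show t' - t = (t' - τ) - (t - τ) by ring, Real.sin_sub, Real.tan_eq_sin_div_cos,
        Real.tan_eq_sin_div_cos]
      field_simp
    have e2 : ρ * ρ' * sin (t' - t) ≤ (tan (t' - τ) - tan (t - τ)) / 4 := by
      rw [e1, div_div, le_div_iff₀ (by positivity)]
      have : (ρ * cos (t - τ)) * (ρ' * cos (t' - τ)) ≤ 1/2 * (1/2) := by
        apply mul_le_mul hrc hrc2 (mul_nonneg r2.1 (by linarith)) (by norm_num)
      nlinarith
    have e3 : tan (t' - τ) - tan (t - τ) ≤ 2 * √3 := by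
      have q1 := hf.1
      have q2 := hf2.2
      rw [div_le_one (by positivity)] at q2
      have q3 : 0 ≤ tan (t - τ) + √3 := by
        rcases div_nonneg_iff.mp q1 with h | h <;> linarith [h.1, h.2]
      linarith
    have := kk_eq
    have hk := kk_lt
    nlinarith [mul_le_mul_of_nonneg_left e3 (by linarith : 0 ≤ 1 - kk)]
  · have hci := chord_interp (y := t - τ) (z := t' - τ) (by linarith)
    set f := (tan (t - τ) + √3) / (2 * √3) with hfdef
    have gL : Gap a a' (τ - π/3) := peak_gap h hτ (by
      rw [show τ - π/3 - τ = -(π/3) by ring, abs_neg, abs_of_pos (by positivity)])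
    have gR : Gap a a' (τ + π/3) := peak_gap h hτ (by
      rw [add_sub_cancel_left, abs_of_pos (by positivity)])
    have sL := side_left_gap h (by linarith : τ - π/3 ≤ t') (by linarith) gL r2
    have sR := side_left_gap h hc (by linarith) gR r2
    rw [show t - τ - (t' - τ) = -(t' - t) by ring, show -(π/3) - (t' - τ) = -(t' - (τ - π/3)) by ring,
      show π/3 - (t' - τ) = -(t' - (τ + π/3)) by ring, Real.sin_neg, Real.sin_neg, Real.sin_neg] at hci
    have hle : ρ * (ρ' * sin (t' - t)) ≤ ρ' * (sin (t' - t) / (2 * cos (t - τ))) := by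
      rw [← mul_div_assoc, le_div_iff₀ (by positivity)]
      nlinarith
    have hci2 : sin (t' - t) / (2 * cos (t - τ)) = (1 - f) * sin (t' - (τ - π/3)) + f * sin (t' - (τ + π/3)) := by
      rw [neg_div] at hci
      linarith
    rw [hci2] at hle
    have k1 := peak_int h hτ (s := t) (t := τ + π/3) (by linarith) (by linarith) le_rfl
    have k2 := peak_int h hτ (s := τ - π/3) (t := τ + π/3) le_rfl (by linarith) le_rfl
    have j1 := intervalIntegral.integral_add_adjacent_intervals (gg_int a a' t (τ + π/3))
      (gg_int a a' (τ + π/3) t')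
    have j2 := intervalIntegral.integral_add_adjacent_intervals (gg_int a a' (τ - π/3) (τ + π/3))
      (gg_int a a' (τ + π/3) t')
    rw [tan_R] at k1 k2
    rw [tan_L] at k2
    have hft : tan (t - τ) = f * (2 * √3) - √3 := by
      rw [hfdef]; field_simp; ring
    have m1 := mul_le_mul_of_nonneg_left sL (sub_nonneg.mpr hf.2)
    have m2 := mul_le_mul_of_nonneg_left sR hf.1
    rw [← j1, k1]
    rw [← j2, k2] at m1
    have : kk / 8 * (√3 - tan (t - τ)) = (1 - f) * (kk / 8 * (√3 - -√3)) := by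
      rw [hft]; ring
    rw [this]
    nlinarith
end

section

/-- squared distance -/
def D (z p : ℂ) : ℝ := (z.re - p.re) ^ 2 + (z.im - p.im) ^ 2

lemma D_eq (z p : ℂ) : D z p = dist z p ^ 2 := by
  rw [Complex.dist_eq, ← Complex.normSq_eq_norm_sq, Complex.normSq_apply]
  simp [D]; ring

lemma D_le {z p : ℂ} {r : ℝ} (hr : 0 ≤ r) : D z p ≤ r ^ 2 ↔ dist z p ≤ r := by
  rw [D_eq]; exact pow_le_pow_iff_left₀ dist_nonneg hr (by norm_num)

lemma D_cont (p : ℂ) : Continuous fun z => D z p := by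
  unfold D
  exact ((Complex.continuous_re.sub continuous_const).pow 2).add
    ((Complex.continuous_im.sub continuous_const).pow 2)

def cr (z w : ℂ) : ℝ := z.re * w.im - z.im * w.re

def Vor (P : Set ℂ) (p : ℂ) : Set ℂ := {z | ∀ q ∈ P, D z p ≤ D z q}

lemma vor_closed (P : Set ℂ) (p : ℂ) : IsClosed (Vor P p) := by
  have : Vor P p = ⋂ q ∈ P, {z | D z p ≤ D z q} := by
    ext z; simp [Vor]
  rw [this]
  exact isClosed_biInter fun q _ => isClosed_le (D_cont p) (D_cont q)

structure Cov (P : Set ℂ) : Prop where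
  fin : ∀ z r, (P ∩ closedBall z r).Finite
  cov : ∀ z, ∃ p ∈ P, dist z p ≤ 1

variable {P : Set ℂ}

lemma Cov.vor_le (hP : Cov P) {p z : ℂ} (hz : z ∈ Vor P p) : dist z p ≤ 1 := by
  obtain ⟨q, hq, h⟩ := hP.cov z
  have := hz q hq
  rw [D_eq, D_eq] at this
  have h2 := (pow_le_pow_iff_left₀ dist_nonneg dist_nonneg (two_ne_zero)).mp this
  linarith

/-- equidistant cells -/
lemma vor_of_eq {p q z : ℂ} (hz : z ∈ Vor P p) (h : D z q = D z p) : z ∈ Vor P q := by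
  intro r hr; rw [h]; exact hz r hr

lemma vor_eq {p q z : ℂ} (hp : p ∈ P) (hq : q ∈ P) (hz : z ∈ Vor P p) (hz' : z ∈ Vor P q) :
    D z q = D z p := le_antisymm (hz' p hp) (hz q hq)

lemma Cov.exists_vor (hP : Cov P) (z : ℂ) : ∃ p ∈ P, z ∈ Vor P p := by
  have hf := hP.fin z 1
  have hne : (P ∩ closedBall z 1).Nonempty := by
    obtain ⟨p, hp, h⟩ := hP.cov z
    exact ⟨p, hp, by rwa [mem_closedBall, dist_comm]⟩
  obtain ⟨p, hp, hmin⟩ := Set.exists_min_image _ (fun q => D z q) hf hne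
  refine ⟨p, hp.1, ?_⟩
  intro q hq
  by_cases h : dist z q ≤ 1
  · exact hmin q ⟨hq, by rwa [mem_closedBall, dist_comm]⟩
  · have h1 : dist z p ≤ 1 := by have := hp.2; rwa [mem_closedBall, dist_comm] at this
    rw [D_eq, D_eq]
    push Not at h
    gcongr; linarith

lemma Cov.local (hP : Cov P) {p y : ℂ} (hy : y ∈ Vor P p) :
    ∀ᶠ z in nhds y, ∀ q ∈ P, y ∉ Vor P q → D z p < D z q := by
  have hf := hP.fin y 3
  have h1 : ∀ᶠ z in nhds y, ∀ q ∈ P ∩ closedBall y 3, y ∉ Vor P q → D z p < D z q := by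
    rw [Filter.eventually_all_finite hf]
    intro q hq
    by_cases hqv : y ∈ Vor P q
    · exact Eventually.of_forall fun z hz => absurd hqv hz
    · have hlt : D y p < D y q := by
        rcases (hy q hq.1).lt_or_eq with h | h
        · exact h
        · exact absurd (vor_of_eq hy h.symm) hqv
      filter_upwards [(D_cont p).continuousAt.eventually_lt (D_cont q).continuousAt hlt] with z hz _
      exact hz
  filter_upwards [h1, Metric.ball_mem_nhds y (by norm_num : (0:ℝ) < 1/2)] with z hz hzy q hq hqv
  by_cases hc : q ∈ closedBall y 3
  · exact hz q ⟨hq, hc⟩ hqv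
  · have h2 := hP.vor_le hy
    rw [mem_ball] at hzy
    rw [mem_closedBall, dist_comm] at hc
    push Not at hc
    have h3 := dist_triangle z y p
    have h4 := dist_triangle y z q
    rw [dist_comm y z] at h4
    rw [D_eq, D_eq]
    gcongr; linarith

lemma Cov.exit (hP : Cov P) {p x : ℂ} (hx : x ∈ Vor P p) (hne : x ≠ p) :
    ∃ q ∈ P, q ≠ p ∧ ∃ y ∈ Vor P p, y ∈ Vor P q ∧ ∃ c : ℝ, 1 ≤ c ∧ y = p + c * (x - p) := by
  set F : ℝ → ℂ := fun c => p + c * (x - p) with hF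
  have hFc : Continuous F := by fun_prop
  have hd : 0 < dist x p := dist_pos.mpr hne
  have hFd : ∀ c, 0 ≤ c → dist (F c) p = c * dist x p := by
    intro c hc
    rw [dist_eq_norm, dist_eq_norm, hF]
    simp [abs_of_nonneg hc]
  set S : Set ℝ := {c | 1 ≤ c ∧ F c ∈ Vor P p} with hS
  have hScl : IsClosed S := isClosed_Ici.inter ((vor_closed P p).preimage hFc)
  have hSb : S ⊆ Set.Icc 1 (1 / dist x p) := by
    intro c hc
    refine ⟨hc.1, ?_⟩
    rw [le_div_iff₀ hd, ← hFd c (by linarith [hc.1])]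
    exact hP.vor_le hc.2
  have hSc : IsCompact S := isCompact_Icc.of_isClosed_subset hScl hSb
  have hSn : S.Nonempty := ⟨1, le_rfl, by simpa [hF] using hx⟩
  obtain ⟨c, hcS, hmax⟩ := hSc.exists_isGreatest hSn
  by_contra hcon
  push Not at hcon
  have hloc := hP.local hcS.2
  have h2 : ∀ᶠ c' in nhds c, F c' ∈ Vor P p := by
    have := hFc.continuousAt.eventually hloc
    filter_upwards [this] with c' hc' q hq
    by_cases hqp : q = p
    · rw [hqp]
    · refine (hc' q hq ?_).le
      intro hh
      exact hcon q hq hqp _ hcS.2 hh c hcS.1 rfl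
  have h3 : ∀ᶠ c' in nhdsWithin c (Set.Ioi c), F c' ∈ Vor P p := nhdsWithin_le_nhds h2
  obtain ⟨c', hc', hlt⟩ := (h3.and self_mem_nhdsWithin).exists
  have := hmax (⟨by linarith [hcS.1, hlt], hc'⟩ : c' ∈ S)
  linarith [hlt]

/-- parametrised bisector -/
def ln (p q : ℂ) (s : ℝ) : ℂ :=
  ⟨(p.re + q.re) / 2 - s * (q.im - p.im), (p.im + q.im) / 2 + s * (q.re - p.re)⟩

lemma ln_cont (p q : ℂ) : Continuous (ln p q) := by
  have : ln p q = fun s : ℝ => (⟨(p.re + q.re) / 2, (p.im + q.im)/2⟩ : ℂ) + (s : ℂ) * ⟨-(q.im - p.im), q.re - p.re⟩ := by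
    funext s
    apply Complex.ext <;> simp [ln] <;> ring
  rw [this]
  fun_prop

lemma ln_D (p q : ℂ) (s : ℝ) : D (ln p q s) q = D (ln p q s) p := by
  simp only [D, ln]; ring

lemma D_pos {p q : ℂ} (h : q ≠ p) : 0 < D q p := by
  rw [D_eq]; have := dist_pos.mpr h; positivity

lemma exists_ln {p q z : ℂ} (hne : q ≠ p) (h : D z q = D z p) : ∃ s, z = ln p q s := by
  have hD := D_pos hne
  refine ⟨((q.re - p.re) * (z.im - p.im) - (q.im - p.im) * (z.re - p.re)) / D q p, ?_⟩
  simp only [D] at h hD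
  have hD' := hD.ne'
  apply Complex.ext <;> simp only [ln, D] <;> field_simp
  · linear_combination (-(q.re - p.re)) * h
  · linear_combination (-(q.im - p.im)) * h

def Sd (P : Set ℂ) (p q : ℂ) : Set ℝ := {s | ln p q s ∈ Vor P p}

lemma Cov.Sd_compact (hP : Cov P) {p q : ℂ} (hne : q ≠ p) : IsCompact (Sd P p q) := by
  have hD := D_pos hne
  apply (isCompact_Icc (a := -(1 / D q p + 1)) (b := 1 / D q p + 1)).of_isClosed_subset
  · exact (vor_closed P p).preimage (ln_cont p q)
  · intro s hs
    have h1 := hP.vor_le hs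
    rw [← D_le zero_le_one] at h1
    have h2 : D (ln p q s) p = (1/4 + s^2) * D q p := by simp only [D, ln]; ring
    rw [h2] at h1
    have h3 : s^2 ≤ 1 / D q p := by
      rw [le_div_iff₀ hD]; nlinarith
    constructor <;> nlinarith [sq_nonneg (s-1), sq_nonneg (s+1), sq_nonneg s]

/-- `q` gives a nondegenerate side of the cell of `p` with parameter range `[lo,hi]` -/
structure Side (P : Set ℂ) (p q : ℂ) (lo hi : ℝ) : Prop where
  mem : q ∈ P
  ne : q ≠ p
  lt : lo < hi
  least : IsLeast (Sd P p q) lo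
  great : IsGreatest (Sd P p q) hi

lemma Side.third (hP : Cov P) {p q : ℂ} {lo hi : ℝ} (h : Side P p q lo hi) :
    ∃ r ∈ P, r ≠ p ∧ r ≠ q ∧ ln p q hi ∈ Vor P r := by
  by_contra hcon
  push Not at hcon
  have hloc := hP.local h.great.1
  have h2 : ∀ᶠ c' in nhds hi, ln p q c' ∈ Vor P p := by
    have := (ln_cont p q).continuousAt.eventually hloc
    filter_upwards [this] with c' hc' r hr
    by_cases hqp : r = p
    · rw [hqp]
    by_cases hrq : r = q
    · rw [hrq, ln_D]
    exact (hc' r hr (hcon r hr hqp hrq)).le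
  have h3 : ∀ᶠ c' in nhdsWithin hi (Set.Ioi hi), ln p q c' ∈ Vor P p := nhdsWithin_le_nhds h2
  obtain ⟨c', hc', hlt⟩ := (h3.and self_mem_nhdsWithin).exists
  have := h.great.2 hc'
  linarith [hlt]

lemma parallel_eq {a b c d x y : ℝ} (h0 : a * d - b * c = 0) (h1 : 2 * (x * a + y * b) = a^2 + b^2)
    (h2 : 2 * (x * c + y * d) = c^2 + d^2) (n1 : 0 < a^2 + b^2) (n2 : 0 < c^2 + d^2) :
    a = c ∧ b = d := by
  set k := (a * c + b * d) / (a^2 + b^2) with hk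
  have hc : c = k * a := by
    rw [hk]; field_simp; linear_combination (-b) * h0
  have hd : d = k * b := by
    rw [hk]; field_simp; linear_combination a * h0
  have h3 : k * (a^2+b^2) = k * k * (a^2 + b^2) := by
    rw [hc, hd] at h2
    linear_combination h2 - k * h1
  have hk0 : k ≠ 0 := by
    rintro h; rw [h] at hc hd; rw [hc, hd] at n2; norm_num at n2
  have hk1 : k = 1 := by
    have : k * (a^2+b^2) * (k - 1) = 0 := by linear_combination -h3
    rcases mul_eq_zero.mp this with h | h
    · rcases mul_eq_zero.mp h with h | h
      · exact absurd h hk0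
      · linarith
    · linarith
  rw [hk1] at hc hd
  constructor <;> linarith

lemma side_eq_of_cr {p q q' : ℂ} {s s' : ℝ} (hne : q ≠ p) (hne' : q' ≠ p)
    (hy : ln p q s = ln p q' s') (h0 : cr (q - p) (q' - p) = 0) : q = q' := by
  have hD := D_pos hne
  have hD' := D_pos hne'
  have e1 := congrArg Complex.re hy
  have e2 := congrArg Complex.im hy
  simp only [ln, cr, D, Complex.sub_re, Complex.sub_im] at *
  have := parallel_eq (x := (p.re + q.re) / 2 - s * (q.im - p.im) - p.re)
    (y := (p.im + q.im) / 2 + s * (q.re - p.re) - p.im) h0 (by ring)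
    (by rw [e1, e2]; ring) hD hD'
  apply Complex.ext <;> linarith [this.1, this.2]

/-- the affine function `D z q' - D z p` along the bisector -/
lemma aff_along (p q q' : ℂ) (s s' : ℝ) :
    (D (ln p q s) q' - D (ln p q s) p) - (D (ln p q s') q' - D (ln p q s') p)
      = -2 * (s - s') * cr (q - p) (q' - p) := by
  simp only [ln, cr, D, Complex.sub_re, Complex.sub_im]; ring

lemma Side.hi_inj {p q q' : ℂ} {lo hi lo' hi' : ℝ} (h : Side P p q lo hi) (h' : Side P p q' lo' hi')
    (hy : ln p q hi = ln p q' hi') : q = q' := by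
  apply side_eq_of_cr h.ne h'.ne hy
  have a1 := aff_along p q q' lo hi
  have a2 := aff_along p q' q lo' hi'
  have b1 : D (ln p q hi) q' - D (ln p q hi) p = 0 := by rw [hy, ln_D]; ring
  have b2 : D (ln p q' hi') q - D (ln p q' hi') p = 0 := by rw [← hy, ln_D]; ring
  have c1 := h.least.1 q' h'.mem
  have c2 := h'.least.1 q h.mem
  have d1 : 0 ≤ (hi - lo) * cr (q - p) (q' - p) := by linarith
  have d2 : 0 ≤ (hi' - lo') * cr (q' - p) (q - p) := by linarith
  have f1 := (mul_nonneg_iff_of_pos_left (sub_pos.mpr h.lt)).mp d1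
  have f2 := (mul_nonneg_iff_of_pos_left (sub_pos.mpr h'.lt)).mp d2
  have : cr (q' - p) (q - p) = - cr (q - p) (q' - p) := by simp only [cr]; ring
  linarith

lemma cone_point {p q z : ℂ} {lo hi : ℝ} (hlt : lo < hi) (hne : q ≠ p)
    (h1 : 0 < cr (ln p q lo - p) z) (h2 : 0 < cr z (ln p q hi - p)) :
    0 < z.re * (q.re - p.re) + z.im * (q.im - p.im) ∧
    ∃ c s : ℝ, 0 < c ∧ lo < s ∧ s < hi ∧ p + c * z = ln p q s := by
  have hD := D_pos hne
  -- multiply out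
  set A := q.re - p.re with hA
  set B := q.im - p.im with hB
  have e1 : cr (ln p q lo - p) z = (z.im * A - z.re * B) / 2 - lo * (z.re * A + z.im * B) := by
    simp only [cr, ln, Complex.sub_re, Complex.sub_im, hA, hB]; ring
  have e2 : cr z (ln p q hi - p) = hi * (z.re * A + z.im * B) - (z.im * A - z.re * B) / 2 := by
    simp only [cr, ln, Complex.sub_re, Complex.sub_im, hA, hB]; ring
  rw [e1] at h1
  rw [e2] at h2
  have hpos : 0 < z.re * A + z.im * B := by
    by_contra hh
    push Not at hh
    nlinarith
  refine ⟨hpos, D q p / (2 * (z.re * A + z.im * B)), (z.im * A - z.re * B) / (2 * (z.re * A + z.im * B)), by positivity, ?_, ?_, ?_⟩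
  · rw [lt_div_iff₀ (by positivity)]; linarith
  · rw [div_lt_iff₀ (by positivity)]; linarith
  · have hDD : D q p = A^2 + B^2 := rfl
    have hq1 : q.re = p.re + A := by rw [hA]; ring
    have hq2 : q.im = p.im + B := by rw [hB]; ring
    rw [hDD]
    have hw := hpos.ne'
    set w := z.re * A + z.im * B with hwd
    apply Complex.ext
    · simp only [Complex.add_re, Complex.re_ofReal_mul, ln, hq1, hq2]
      field_simp; rw [hwd]; ring
    · simp only [Complex.add_im, Complex.im_ofReal_mul, ln, hq1, hq2]
      field_simp; rw [hwd]; ring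

/-- convexity of the side -/
lemma Side.mem_mid {p q : ℂ} {lo hi s : ℝ} (h : Side P p q lo hi) (h1 : lo ≤ s) (h2 : s ≤ hi) :
    ln p q s ∈ Vor P p := by
  intro r hr
  have a1 := h.least.1 r hr
  have a2 := h.great.1 r hr
  have b1 := aff_along p q r s lo
  have b2 := aff_along p q r hi s
  rcases le_total 0 (cr (q - p) (r - p)) with hc | hc
  · nlinarith [mul_nonneg (sub_nonneg.mpr h2) hc]
  · nlinarith [mul_nonneg (sub_nonneg.mpr h1) (neg_nonneg.mpr hc)]

lemma cone_c_le {p q q' z : ℂ} {c c' s s' : ℝ} (hq' : q' ∈ P)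
    (hv : ln p q s ∈ Vor P p) (e : p + c * z = ln p q s) (e' : p + c' * z = ln p q' s')
    (hpos : 0 < z.re * (q'.re - p.re) + z.im * (q'.im - p.im)) : c ≤ c' := by
  have h1 := hv q' hq'
  have h2 := ln_D p q' s'
  rw [← e] at h1
  rw [← e'] at h2
  simp only [D, Complex.add_re, Complex.add_im, Complex.re_ofReal_mul, Complex.im_ofReal_mul] at h1 h2
  by_contra hh
  push Not at hh
  nlinarith [mul_pos (sub_pos.mpr hh) hpos]

lemma cone_disj {p q q' z : ℂ} {lo hi lo' hi' : ℝ} (h : Side P p q lo hi) (h' : Side P p q' lo' hi')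
    (h1 : 0 < cr (ln p q lo - p) z) (h2 : 0 < cr z (ln p q hi - p))
    (h1' : 0 < cr (ln p q' lo' - p) z) (h2' : 0 < cr z (ln p q' hi' - p)) : q = q' := by
  obtain ⟨hpos, c, s, hc, hs1, hs2, e⟩ := cone_point h.lt h.ne h1 h2
  obtain ⟨hpos', c', s', hc', hs1', hs2', e'⟩ := cone_point h'.lt h'.ne h1' h2'
  have hcc : c = c' := le_antisymm
    (cone_c_le h'.mem (h.mem_mid hs1.le hs2.le) e e' hpos')
    (cone_c_le h.mem (h'.mem_mid hs1'.le hs2'.le) e' e hpos)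
  have hy : ln p q s = ln p q' s' := by rw [← e, ← e', hcc]
  apply side_eq_of_cr h.ne h'.ne hy
  have b1 : D (ln p q s) q' - D (ln p q s) p = 0 := by rw [hy, ln_D]; ring
  have a1 := aff_along p q q' lo s
  have a2 := aff_along p q q' hi s
  have c1 := h.least.1 q' h'.mem
  have c2 := h.great.1 q' h'.mem
  have d1 : 0 ≤ (s - lo) * cr (q - p) (q' - p) := by linarith
  have d2 : 0 ≤ (hi - s) * (-cr (q - p) (q' - p)) := by linarith
  have f1 := (mul_nonneg_iff_of_pos_left (sub_pos.mpr hs1)).mp d1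
  have f2 := (mul_nonneg_iff_of_pos_left (sub_pos.mpr hs2)).mp d2
  linarith

/-- the triangle `p, p+x, p+y` -/
def Tri (p x y : ℂ) : Set ℂ := {z | ∃ u v : ℝ, 0 ≤ u ∧ 0 ≤ v ∧ u + v ≤ 1 ∧ z = p + u * x + v * y}

lemma cr_ln (p q : ℂ) (s s' : ℝ) : cr (ln p q s - p) (ln p q s' - p) = (s' - s) * D q p / 2 := by
  simp only [cr, ln, D, Complex.sub_re, Complex.sub_im]; ring

/-- all neighbours, including those sharing only a point -/
def Nb (P : Set ℂ) (p : ℂ) : Set ℂ := {q | q ∈ P ∧ q ≠ p ∧ (Sd P p q).Nonempty}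

lemma Cov.nb_fin (hP : Cov P) (p : ℂ) : (Nb P p).Finite := by
  apply (hP.fin p 2).subset
  rintro q ⟨hq, hne, s, hs⟩
  refine ⟨hq, ?_⟩
  have h1 := hP.vor_le hs
  have h2 := ln_D p q s
  rw [← D_le zero_le_one, ← h2, D_le zero_le_one] at h1
  have h3 := hP.vor_le hs
  rw [mem_closedBall]
  have := dist_triangle q (ln p q s) p
  rw [dist_comm q (ln p q s)] at this
  linarith

def lo (P : Set ℂ) (p q : ℂ) : ℝ := sInf (Sd P p q)
def hi (P : Set ℂ) (p q : ℂ) : ℝ := sSup (Sd P p q)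

lemma Cov.lo_least (hP : Cov P) {p q : ℂ} (h : q ∈ Nb P p) : IsLeast (Sd P p q) (lo P p q) :=
  (hP.Sd_compact h.2.1).isLeast_sInf h.2.2
lemma Cov.hi_great (hP : Cov P) {p q : ℂ} (h : q ∈ Nb P p) : IsGreatest (Sd P p q) (hi P p q) :=
  (hP.Sd_compact h.2.1).isGreatest_sSup h.2.2
lemma Cov.lo_le_hi (hP : Cov P) {p q : ℂ} (h : q ∈ Nb P p) : lo P p q ≤ hi P p q :=
  (hP.lo_least h).2 (hP.hi_great h).1

def sides (P : Set ℂ) (p : ℂ) : Set ℂ := {q | q ∈ Nb P p ∧ lo P p q < hi P p q}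

lemma Cov.side (hP : Cov P) {p q : ℂ} (h : q ∈ sides P p) : Side P p q (lo P p q) (hi P p q) :=
  ⟨h.1.1, h.1.2.1, h.2, hP.lo_least h.1, hP.hi_great h.1⟩

lemma Cov.vor_subset (hP : Cov P) {p : ℂ} (hp : p ∈ P) :
    Vor P p ⊆ {p} ∪ ⋃ q ∈ Nb P p, Tri p (ln p q (lo P p q) - p) (ln p q (hi P p q) - p) := by
  intro x hx
  by_cases hxp : x = p
  · left; exact hxp
  right
  obtain ⟨q, hq, hqp, y, hy, hyq, c, hc, hyc⟩ := hP.exit hx hxp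
  obtain ⟨s, hs⟩ := exists_ln hqp (vor_eq hp hq hy hyq)
  have hsS : s ∈ Sd P p q := by rw [hs] at hy; exact hy
  have hnb : q ∈ Nb P p := ⟨hq, hqp, s, hsS⟩
  simp only [Set.mem_iUnion]
  refine ⟨q, hnb, ?_⟩
  have h1 := (hP.lo_least hnb).2 hsS
  have h2 := (hP.hi_great hnb).2 hsS
  set l := lo P p q
  set h := hi P p q
  have hx' : x = p + (1/c : ℝ) * (ln p q s - p) := by
    rw [← hs, hyc]
    have : (c : ℂ) ≠ 0 := by exact_mod_cast (by linarith : c ≠ 0)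
    push_cast; field_simp; ring
  -- s as a convex combination
  obtain ⟨f, hf0, hf1, hf⟩ : ∃ f : ℝ, 0 ≤ f ∧ f ≤ 1 ∧ s = (1 - f) * l + f * h := by
    rcases (h1.trans h2).eq_or_lt with e | e
    · exact ⟨0, le_rfl, zero_le_one, by linarith⟩
    · refine ⟨(s - l) / (h - l), by apply div_nonneg <;> linarith, by rw [div_le_one] <;> linarith, ?_⟩
      have : h - l ≠ 0 := by linarith
      field_simp; ring
  have hc1 : 1 / c ≤ 1 := by rw [div_le_one] <;> linarith
  have hc0 : 0 ≤ 1 / c := by positivity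
  refine ⟨1/c * (1 - f), 1/c * f, mul_nonneg hc0 (by linarith), mul_nonneg hc0 hf0, by linarith, ?_⟩
  rw [hx', hf]
  set c' := 1 / c
  apply Complex.ext
  · simp only [Complex.add_re, Complex.re_ofReal_mul, Complex.sub_re, ln]; ring
  · simp only [Complex.add_im, Complex.im_ofReal_mul, Complex.sub_im, ln]; ring
end

section
variable {P : Set ℂ}

def T0 : Set ℂ := {z | 0 ≤ z.re ∧ 0 ≤ z.im ∧ z.re + z.im ≤ 1}

lemma T0_vol : volume T0 ≤ ENNReal.ofReal (1/2) := by
  have h := Complex.volume_preserving_equiv_real_prod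
  set T1 : Set (ℝ × ℝ) := {z | 0 ≤ z.1 ∧ 0 ≤ z.2 ∧ z.1 + z.2 ≤ 1} with hT1
  have hcl : IsClosed T1 := by
    apply IsClosed.inter (isClosed_le continuous_const continuous_fst)
    apply IsClosed.inter (isClosed_le continuous_const continuous_snd)
    exact isClosed_le (continuous_fst.add continuous_snd) continuous_const
  have e : T0 = Complex.measurableEquivRealProd ⁻¹' T1 := by
    ext z; simp [T0, T1, Complex.measurableEquivRealProd]
  rw [e, h.measure_preimage hcl.measurableSet.nullMeasurableSet, Measure.volume_eq_prod,
    Measure.prod_apply hcl.measurableSet]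
  have e2 : ∀ x : ℝ, volume (Prod.mk x ⁻¹' T1) = (Set.Icc (0:ℝ) 1).indicator (fun x => ENNReal.ofReal (1 - x)) x := by
    intro x
    by_cases hx : x ∈ Set.Icc (0:ℝ) 1
    · rw [Set.indicator_of_mem hx]
      have : Prod.mk x ⁻¹' T1 = Set.Icc 0 (1 - x) := by
        ext y; simp only [T1, Set.mem_preimage, Set.mem_ofPred_eq, Set.mem_Icc]
        constructor
        · rintro ⟨_, h1, h2⟩; exact ⟨h1, by linarith⟩
        · rintro ⟨h1, h2⟩; exact ⟨hx.1, h1, by linarith⟩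
      rw [this, Real.volume_Icc, sub_zero]
    · rw [Set.indicator_of_notMem hx]
      have : Prod.mk x ⁻¹' T1 = ∅ := by
        ext y; simp only [T1, Set.mem_preimage, Set.mem_ofPred_eq, Set.mem_empty_iff_false, iff_false]
        rintro ⟨h0, h1, h2⟩
        exact hx ⟨h0, by linarith⟩
      rw [this, measure_empty]
  simp_rw [e2]
  rw [lintegral_indicator measurableSet_Icc, ← ofReal_integral_eq_lintegral_ofReal]
  · rw [integral_Icc_eq_integral_Ioc, ← intervalIntegral.integral_of_le zero_le_one]
    apply ENNReal.ofReal_le_ofReal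
    rw [intervalIntegral.integral_sub (by simp) (by simp)]
    simp; norm_num
  · exact (Continuous.continuousOn (by fun_prop)).integrableOn_Icc
  · filter_upwards [self_mem_ae_restrict measurableSet_Icc] with x hx
    simp; exact hx.2

def LL (x y : ℂ) : ℂ →ₗ[ℝ] ℂ where
  toFun z := z.re * x + z.im * y
  map_add' a b := by simp; ring
  map_smul' c a := by simp; ring

lemma LL_det (x y : ℂ) : LinearMap.det (LL x y) = cr x y := by
  rw [← LinearMap.det_toMatrix Complex.basisOneI, Matrix.det_fin_two]
  simp [LinearMap.toMatrix_apply, LL, cr]; ring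

lemma tri_vol (p x y : ℂ) (h : 0 ≤ cr x y) : volume (Tri p x y) ≤ ENNReal.ofReal (cr x y / 2) := by
  have : Tri p x y ⊆ (fun z => p + z) '' (LL x y '' T0) := by
    rintro z ⟨u, v, hu, hv, huv, rfl⟩
    refine ⟨_, ⟨⟨u, v⟩, ⟨hu, hv, huv⟩, rfl⟩, ?_⟩
    simp [LL]; ring
  refine (measure_mono this).trans ?_
  rw [Set.image_add_left, measure_preimage_add, Measure.addHaar_image_linearMap, LL_det, abs_of_nonneg h]
  calc ENNReal.ofReal (cr x y) * volume T0 ≤ ENNReal.ofReal (cr x y) * ENNReal.ofReal (1/2) := by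
        gcongr; exact T0_vol
    _ = _ := by rw [← ENNReal.ofReal_mul h]; congr 1; ring

lemma polar_pair {x y : ℂ} (h : 0 < cr x y) : ∃ t t' : ℝ, t < t' ∧ t' < t + π ∧
    x.re = ‖x‖ * cos t ∧ x.im = ‖x‖ * sin t ∧ y.re = ‖y‖ * cos t' ∧ y.im = ‖y‖ * sin t' := by
  have hx : x ≠ 0 := by rintro rfl; simp [cr] at h
  have hy : y ≠ 0 := by rintro rfl; simp [cr] at h
  have nx := norm_pos_iff.mpr hx
  have ny := norm_pos_iff.mpr hy
  have hx1 : x.re = ‖x‖ * cos x.arg := by rw [Complex.cos_arg hx]; field_simp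
  have hx2 : x.im = ‖x‖ * sin x.arg := by rw [Complex.sin_arg]; field_simp
  have hy1 : y.re = ‖y‖ * cos y.arg := by rw [Complex.cos_arg hy]; field_simp
  have hy2 : y.im = ‖y‖ * sin y.arg := by rw [Complex.sin_arg]; field_simp
  have hs : 0 < sin (y.arg - x.arg) := by
    have : cr x y = ‖x‖ * ‖y‖ * sin (y.arg - x.arg) := by
      rw [Real.sin_sub]; unfold cr; rw [hx1, hx2, hy1, hy2]; ring
    rw [this] at h
    exact (mul_pos_iff_of_pos_left (by positivity)).mp h
  have b1 := Complex.neg_pi_lt_arg x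
  have b2 := Complex.arg_le_pi x
  have b3 := Complex.neg_pi_lt_arg y
  have b4 := Complex.arg_le_pi y
  have hp := Real.pi_pos
  rcases lt_or_ge x.arg y.arg with hc | hc
  · refine ⟨x.arg, y.arg, hc, ?_, hx1, hx2, hy1, hy2⟩
    by_contra hh
    push Not at hh
    have h2 := Real.sin_nonneg_of_nonneg_of_le_pi (x := y.arg - x.arg - π) (by linarith) (by linarith)
    rw [Real.sin_sub_pi] at h2; linarith
  · refine ⟨x.arg, y.arg + 2 * π, by linarith, ?_, hx1, hx2, by rw [Real.cos_add_two_pi]; exact hy1,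
      by rw [Real.sin_add_two_pi]; exact hy2⟩
    by_contra hh
    push Not at hh
    have h2 := Real.sin_nonneg_of_nonneg_of_le_pi (x := x.arg - y.arg) (by linarith) (by linarith)
    rw [← neg_sub, Real.sin_neg] at h2; linarith

def dir (θ : ℝ) : ℂ := ⟨cos θ, sin θ⟩

def Cone (x y : ℂ) : Set ℝ := {θ | 0 < cr x (dir θ) ∧ 0 < cr (dir θ) y}

lemma cone_meas (x y : ℂ) : MeasurableSet (Cone x y) := by
  have m1 : Measurable fun θ => cr x (dir θ) := by unfold cr dir; fun_prop
  have m2 : Measurable fun θ => cr (dir θ) y := by unfold cr dir; fun_prop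
  exact (measurableSet_lt measurable_const m1).inter (measurableSet_lt measurable_const m2)

lemma arc_mass (a a' : ℝ) {x y : ℂ} {t t' : ℝ} (h1 : t < t') (h2 : t' < t + π)
    (nx : 0 < ‖x‖) (ny : 0 < ‖y‖) (hx1 : x.re = ‖x‖ * cos t) (hx2 : x.im = ‖x‖ * sin t)
    (hy1 : y.re = ‖y‖ * cos t') (hy2 : y.im = ‖y‖ * sin t') :
    ∫ u in t..t', gg a a' u ≤ ∫ u in Set.Ioc (-π) π ∩ Cone x y, gg a a' u := by
  have hp := Real.pi_pos
  set G : ℝ → ℝ := (Cone x y).indicator (gg a a') with hG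
  have hGper : Function.Periodic G (2 * π) := by
    intro s
    have hd : dir (s + 2 * π) = dir s := by simp [dir]
    have hm : s + 2 * π ∈ Cone x y ↔ s ∈ Cone x y := by simp [Cone, hd]
    by_cases hs : s ∈ Cone x y
    · simp only [hG, Set.indicator_of_mem hs, Set.indicator_of_mem (hm.mpr hs), gg_per a a' s]
    · simp only [hG, Set.indicator_of_notMem hs, Set.indicator_of_notMem (mt hm.mp hs)]
  have hG0 : ∀ s, 0 ≤ G s := fun s => Set.indicator_nonneg (fun s _ => (gg_bd a a' s).1.le) s
  have hGi : ∀ s s', IntervalIntegrable G volume s s' := by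
    intro s s'
    have := gg_int a a' s s'
    rw [intervalIntegrable_iff] at this ⊢
    exact this.indicator (cone_meas x y)
  have e1 : ∫ u in Set.Ioc (-π) π ∩ Cone x y, gg a a' u = ∫ u in (-π)..π, G u := by
    rw [intervalIntegral.integral_of_le (by linarith), setIntegral_indicator (cone_meas x y)]
  have e2 : ∫ u in (-π)..π, G u = ∫ u in t..(t + 2 * π), G u := by
    rw [← hGper.intervalIntegral_add_eq (-π) t]
    congr 1; ring
  have e3 : ∫ u in t..t', gg a a' u = ∫ u in t..t', G u := by
    apply intervalIntegral.integral_congr_Ioo_of_le h1.le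
    intro u hu
    have : u ∈ Cone x y := by
      constructor
      · have : cr x (dir u) = ‖x‖ * sin (u - t) := by
          rw [Real.sin_sub]; simp only [cr, dir, hx1, hx2]; ring
        rw [this]
        exact mul_pos nx (Real.sin_pos_of_pos_of_lt_pi (by linarith [hu.1]) (by linarith [hu.2]))
      · have : cr (dir u) y = ‖y‖ * sin (t' - u) := by
          rw [Real.sin_sub]; simp only [cr, dir, hy1, hy2]; ring
        rw [this]
        exact mul_pos ny (Real.sin_pos_of_pos_of_lt_pi (by linarith [hu.2]) (by linarith [hu.1]))
    simp only [hG, Set.indicator_of_mem this]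
  rw [e1, e2, e3]
  exact intervalIntegral.integral_mono_interval le_rfl h1.le (by linarith)
    (Eventually.of_forall hG0) (hGi _ _)

lemma Cov.sides_fin (hP : Cov P) (p : ℂ) : (sides P p).Finite :=
  (hP.nb_fin p).subset fun _ h => h.1

lemma rad_of {a t : ℝ} {x : ℂ} (h1 : x.re = ‖x‖ * cos t) (h2 : x.im = ‖x‖ * sin t)
    (h : x.re * cos a + x.im * sin a ≤ 1/2) : ‖x‖ * cos (t - a) ≤ 1/2 := by
  rw [Real.cos_sub]
  calc _ = (‖x‖ * cos t) * cos a + (‖x‖ * sin t) * sin a := by ring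
    _ ≤ _ := by rw [← h1, ← h2]; exact h

lemma Cov.side_bound (hP : Cov P) {p q : ℂ} {a a' : ℝ} (h : cos (a - a') ≤ -1/2)
    (hR : ∀ z ∈ Vor P p, (z - p).re * cos a + (z - p).im * sin a ≤ 1/2 ∧
      (z - p).re * cos a' + (z - p).im * sin a' ≤ 1/2) (hq : q ∈ sides P p) :
    cr (ln p q (lo P p q) - p) (ln p q (hi P p q) - p) / 2 ≤
      bb + ∫ u in Set.Ioc (-π) π ∩ Cone (ln p q (lo P p q) - p) (ln p q (hi P p q) - p), gg a a' u := by
  have hs := hP.side hq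
  have hx := hs.least.1
  have hy := hs.great.1
  set l := lo P p q
  set r := hi P p q
  have hpos : 0 < cr (ln p q l - p) (ln p q r - p) := by
    rw [cr_ln]
    have := D_pos hs.ne
    have := sub_pos.mpr hs.lt
    positivity
  obtain ⟨t, t', h1, h2, hx1, hx2, hy1, hy2⟩ := polar_pair hpos
  have nx : 0 < ‖ln p q l - p‖ := norm_pos_iff.mpr (by intro h; rw [h] at hpos; simp [cr] at hpos)
  have ny : 0 < ‖ln p q r - p‖ := norm_pos_iff.mpr (by intro h; rw [h] at hpos; simp [cr] at hpos)
  have am := arc_mass a a' h1 h2 nx ny hx1 hx2 hy1 hy2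
  have rx : Rad a a' t ‖ln p q l - p‖ := by
    refine ⟨norm_nonneg _, ?_, rad_of hx1 hx2 (hR _ hx).1, rad_of hx1 hx2 (hR _ hx).2⟩
    rw [← dist_eq_norm]; exact hP.vor_le hx
  have ry : Rad a a' t' ‖ln p q r - p‖ := by
    refine ⟨norm_nonneg _, ?_, rad_of hy1 hy2 (hR _ hy).1, rad_of hy1 hy2 (hR _ hy).2⟩
    rw [← dist_eq_norm]; exact hP.vor_le hy
  have si := side_ineq h h1.le h2.le rx ry
  have e : cr (ln p q l - p) (ln p q r - p) = ‖ln p q l - p‖ * ‖ln p q r - p‖ * sin (t' - t) := by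
    rw [Real.sin_sub]
    calc _ = (ln p q l - p).re * (ln p q r - p).im - (ln p q l - p).im * (ln p q r - p).re := rfl
      _ = _ := by rw [hx1, hx2, hy1, hy2]; ring
  rw [e]
  linarith

lemma Cov.cell_area (hP : Cov P) {p : ℂ} (hp : p ∈ P) {a a' : ℝ} (h : cos (a - a') ≤ -1/2)
    (hR : ∀ z ∈ Vor P p, (z - p).re * cos a + (z - p).im * sin a ≤ 1/2 ∧
      (z - p).re * cos a' + (z - p).im * sin a' ≤ 1/2) :
    volume (Vor P p) ≤ ENNReal.ofReal (TT + bb * (sides P p).ncard) := by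
  classical
  set NF := (hP.nb_fin p).toFinset with hNF
  set SF := (hP.sides_fin p).toFinset with hSF
  set X : ℂ → ℂ := fun q => ln p q (lo P p q) - p with hX
  set Y : ℂ → ℂ := fun q => ln p q (hi P p q) - p with hY
  have hcr : ∀ q ∈ NF, 0 ≤ cr (X q) (Y q) := by
    intro q hq
    have hq : q ∈ Nb P p := by simpa [hNF] using hq
    simp only [hX, hY]
    rw [cr_ln]
    have := D_pos hq.2.1
    have := sub_nonneg.mpr (hP.lo_le_hi hq)
    positivity
  have s1 : volume (Vor P p) ≤ ENNReal.ofReal (∑ q ∈ NF, cr (X q) (Y q) / 2) := by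
    calc volume (Vor P p) ≤ volume ({p} ∪ ⋃ q ∈ NF, Tri p (X q) (Y q)) := by
          apply measure_mono
          refine (hP.vor_subset hp).trans ?_
          simp [hNF, hX, hY]
      _ ≤ volume {p} + volume (⋃ q ∈ NF, Tri p (X q) (Y q)) := measure_union_le _ _
      _ = volume (⋃ q ∈ NF, Tri p (X q) (Y q)) := by simp
      _ ≤ ∑ q ∈ NF, volume (Tri p (X q) (Y q)) := measure_biUnion_finset_le _ _
      _ ≤ ∑ q ∈ NF, ENNReal.ofReal (cr (X q) (Y q) / 2) :=
          Finset.sum_le_sum fun q hq => tri_vol _ _ _ (hcr q hq)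
      _ = _ := by
          rw [ENNReal.ofReal_sum_of_nonneg]
          intro q hq
          linarith [hcr q hq]
  have s2 : ∑ q ∈ NF, cr (X q) (Y q) / 2 = ∑ q ∈ SF, cr (X q) (Y q) / 2 := by
    symm
    apply Finset.sum_subset
    · intro q hq
      simp only [hSF, hNF, Set.Finite.mem_toFinset] at *
      exact hq.1
    · intro q hq hq'
      simp only [hSF, hNF, Set.Finite.mem_toFinset] at hq hq'
      have h1 := hP.lo_le_hi hq
      have h2 : lo P p q = hi P p q := by
        rcases h1.lt_or_eq with h | h
        · exact absurd ⟨hq, h⟩ hq'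
        · exact h
      simp only [hX, hY]
      rw [cr_ln, h2]; simp
  have s3 : ∑ q ∈ SF, cr (X q) (Y q) / 2 ≤
      ∑ q ∈ SF, (bb + ∫ u in Set.Ioc (-π) π ∩ Cone (X q) (Y q), gg a a' u) := by
    apply Finset.sum_le_sum
    intro q hq
    exact hP.side_bound h hR (by simpa [hSF] using hq)
  have hintg : IntegrableOn (gg a a') (Set.Ioc (-π) π) volume := by
    have := gg_int a a' (-π) π
    rwa [intervalIntegrable_iff_integrableOn_Ioc_of_le (by linarith [Real.pi_pos])] at this
  have s4 : ∑ q ∈ SF, (∫ u in Set.Ioc (-π) π ∩ Cone (X q) (Y q), gg a a' u) ≤ TT := by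
    rw [← integral_biUnion_finset]
    · rw [← gg_total h, intervalIntegral.integral_of_le (by linarith [Real.pi_pos])]
      apply setIntegral_mono_set hintg
      · exact Eventually.of_forall fun u => (gg_bd a a' u).1.le
      · apply LE.le.eventuallyLE
        apply Set.iUnion₂_subset
        intro q _
        exact Set.inter_subset_left
    · intro q _
      exact measurableSet_Ioc.inter (cone_meas _ _)
    · intro q hq q' hq' hne
      rw [Function.onFun, Set.disjoint_left]
      rintro θ ⟨_, h1, h2⟩ ⟨_, h1', h2'⟩
      apply hne
      have hq : q ∈ sides P p := by simpa [hSF] using hq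
      have hq' : q' ∈ sides P p := by simpa [hSF] using hq'
      exact cone_disj (hP.side hq) (hP.side hq') h1 h2 h1' h2'
    · intro q _
      exact hintg.mono_set Set.inter_subset_left
  refine s1.trans (ENNReal.ofReal_le_ofReal ?_)
  rw [s2]
  refine s3.trans ?_
  rw [Finset.sum_add_distrib, Finset.sum_const, nsmul_eq_mul]
  have : (sides P p).ncard = SF.card := Set.ncard_eq_toFinset_card _ (hP.sides_fin p)
  rw [this]
  linarith
end

section
variable {P : Set ℂ}

theorem generic_slope (V B : Finset ℂ) : ∃ s : ℝ,
    (∀ x ∈ V, ∀ y ∈ V, x.re + s * x.im = y.re + s * y.im → x = y) ∧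
    (∀ x ∈ B, ∀ y ∈ B, x.im - s * x.re = y.im - s * y.re → x = y) := by
  have key : ∀ a b : ℝ, (a ≠ 0 ∨ b ≠ 0) → ({s : ℝ | a + s * b = 0}).Finite := by
    intro a b h
    apply Set.Subsingleton.finite
    intro s hs t ht
    simp only [Set.mem_ofPred_eq] at hs ht
    by_cases hb : b = 0
    · subst hb; simp at hs; simp [hs] at h
    · apply mul_right_cancel₀ hb; linarith
  have ne : ∀ x y : ℂ, x ≠ y → (x.re - y.re ≠ 0 ∨ x.im - y.im ≠ 0) := by
    intro x y hxy
    by_contra! h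
    exact hxy (Complex.ext (by linarith [h.1]) (by linarith [h.2]))
  have f1 : (⋃ x ∈ V, ⋃ y ∈ V, {s : ℝ | x ≠ y ∧ x.re + s * x.im = y.re + s * y.im}).Finite := by
    refine V.finite_toSet.biUnion fun x _ => V.finite_toSet.biUnion fun y _ => ?_
    by_cases hxy : x = y
    · simp [hxy]
    · refine (key _ _ (ne x y hxy)).subset ?_
      rintro s ⟨_, hs⟩
      simp only [Set.mem_ofPred_eq]; linarith
  have f2 : (⋃ x ∈ B, ⋃ y ∈ B, {s : ℝ | x ≠ y ∧ x.im - s * x.re = y.im - s * y.re}).Finite := by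
    refine B.finite_toSet.biUnion fun x _ => B.finite_toSet.biUnion fun y _ => ?_
    by_cases hxy : x = y
    · simp [hxy]
    · refine (key (x.im - y.im) (-(x.re - y.re)) ?_).subset ?_
      · rcases ne x y hxy with h | h
        · right; exact neg_ne_zero.2 h
        · left; exact h
      rintro s ⟨_, hs⟩
      simp only [Set.mem_ofPred_eq]; linarith
  obtain ⟨s, hs⟩ := (f1.union f2).exists_notMem
  refine ⟨s, ?_, ?_⟩
  · intro x hx y hy h
    by_contra hne
    apply hs; left
    simp only [Set.mem_iUnion]
    exact ⟨x, hx, y, hy, hne, h⟩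
  · intro x hx y hy h
    by_contra hne
    apply hs; right
    simp only [Set.mem_iUnion]
    exact ⟨x, hx, y, hy, hne, h⟩

set_option maxHeartbeats 2000000 in
theorem no_mid {s : ℝ} {v p a b x y : ℂ} (hp : p ∈ P) (ha : a ∈ P) (hb : b ∈ P)
    (hvp : v ∈ Vor P p) (hva : v ∈ Vor P a) (hvb : v ∈ Vor P b)
    (hx : x ∈ Vor P p) (hy : y ∈ Vor P p)
    (h1 : v.re + s * v.im < x.re + s * x.im) (h2 : y.re + s * y.im < v.re + s * v.im)
    (h3 : a.im - s * a.re < p.im - s * p.re) (h4 : p.im - s * p.re < b.im - s * b.re) : False := by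
  have ea := vor_eq hp ha hvp hva
  have eb := vor_eq hp hb hvp hvb
  have xa := hx a ha
  have xb := hx b hb
  have ya := hy a ha
  have yb := hy b hb
  unfold D at *
  obtain ⟨h, hh⟩ : ∃ h, h = x - v := ⟨_, rfl⟩
  obtain ⟨k, hk⟩ : ∃ k, k = y - v := ⟨_, rfl⟩
  obtain ⟨d, hd⟩ : ∃ d, d = p - a := ⟨_, rfl⟩
  obtain ⟨e, he⟩ : ∃ e, e = p - b := ⟨_, rfl⟩
  obtain ⟨g, hg⟩ : ∃ g, g = v - p := ⟨_, rfl⟩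
  have hxr : x.re = v.re + h.re := by rw [hh]; simp
  have hxi : x.im = v.im + h.im := by rw [hh]; simp
  have hyr : y.re = v.re + k.re := by rw [hk]; simp
  have hyi : y.im = v.im + k.im := by rw [hk]; simp
  have har : a.re = p.re - d.re := by rw [hd]; simp
  have hai : a.im = p.im - d.im := by rw [hd]; simp
  have hbr : b.re = p.re - e.re := by rw [he]; simp
  have hbi : b.im = p.im - e.im := by rw [he]; simp
  have hvr : v.re = p.re + g.re := by rw [hg]; simp
  have hvi : v.im = p.im + g.im := by rw [hg]; simp
  clear hh hk hd he hg
  rw [hxr, hxi, hvr, hvi] at h1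
  rw [hyr, hyi, hvr, hvi] at h2
  rw [har, hai] at h3
  rw [hbr, hbi] at h4
  rw [hvr, hvi, har, hai] at ea
  rw [hvr, hvi, hbr, hbi] at eb
  rw [hxr, hxi, hvr, hvi, har, hai] at xa
  rw [hxr, hxi, hvr, hvi, hbr, hbi] at xb
  rw [hyr, hyi, hvr, hvi, har, hai] at ya
  rw [hyr, hyi, hvr, hvi, hbr, hbi] at yb
  have ea' : 2 * (g.re * d.re + g.im * d.im) + (d.re ^ 2 + d.im ^ 2) = 0 := by linarith
  have eb' : 2 * (g.re * e.re + g.im * e.im) + (e.re ^ 2 + e.im ^ 2) = 0 := by linarith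
  have xa' : 0 ≤ h.re * d.re + h.im * d.im := by linarith
  have xb' : 0 ≤ h.re * e.re + h.im * e.im := by linarith
  have ya' : 0 ≤ k.re * d.re + k.im * d.im := by linarith
  have yb' : 0 ≤ k.re * e.re + k.im * e.im := by linarith
  have hα : 0 < h.re + s * h.im := by linarith
  have hβ : 0 < -(k.re + s * k.im) := by linarith
  have hwd : 0 < d.im - s * d.re := by linarith
  have hwe : e.im - s * e.re < 0 := by linarith
  clear ea eb xa xb ya yb h1 h2 h3 h4
  obtain ⟨α, hα'⟩ : ∃ α, α = h.re + s * h.im := ⟨_, rfl⟩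
  obtain ⟨β, hβ'⟩ : ∃ β, β = -(k.re + s * k.im) := ⟨_, rfl⟩
  rw [← hα'] at hα
  rw [← hβ'] at hβ
  obtain ⟨t, ht⟩ : ∃ t, t = β * h.im + α * k.im := ⟨_, rfl⟩
  have htr : β * h.re + α * k.re = - s * t := by rw [ht, hα', hβ']; ring
  have hd0 : 0 ≤ t * (d.im - s * d.re) := by
    have : t * (d.im - s * d.re) = β * (h.re * d.re + h.im * d.im) + α * (k.re * d.re + k.im * d.im) := by
      linear_combination d.im * ht - d.re * htr
    rw [this]; positivity
  have he0 : 0 ≤ t * (e.im - s * e.re) := by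
    have : t * (e.im - s * e.re) = β * (h.re * e.re + h.im * e.im) + α * (k.re * e.re + k.im * e.im) := by
      linear_combination e.im * ht - e.re * htr
    rw [this]; positivity
  have t0 : t = 0 := by
    have a1 : 0 ≤ t := nonneg_of_mul_nonneg_left hd0 hwd
    have a2 : t ≤ 0 := by
      by_contra! hc
      nlinarith
    linarith
  rw [t0] at ht htr
  have hd1 : β * (h.re * d.re + h.im * d.im) + α * (k.re * d.re + k.im * d.im) = 0 := by
    linear_combination d.re * htr - d.im * ht
  have he1 : β * (h.re * e.re + h.im * e.im) + α * (k.re * e.re + k.im * e.im) = 0 := by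
    linear_combination e.re * htr - e.im * ht
  have hd2 : h.re * d.re + h.im * d.im = 0 := by
    have := mul_nonneg hα.le ya'
    have := mul_nonneg hβ.le xa'
    have h0 : β * (h.re * d.re + h.im * d.im) = 0 := by linarith
    exact (mul_eq_zero.1 h0).resolve_left hβ.ne'
  have he2 : h.re * e.re + h.im * e.im = 0 := by
    have := mul_nonneg hα.le yb'
    have := mul_nonneg hβ.le xb'
    have h0 : β * (h.re * e.re + h.im * e.im) = 0 := by linarith
    exact (mul_eq_zero.1 h0).resolve_left hβ.ne'
  have cr0 : d.re * e.im - d.im * e.re = 0 := by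
    have c1 : h.re * (d.re * e.im - d.im * e.re) = 0 := by linear_combination e.im * hd2 - d.im * he2
    have c2 : h.im * (d.re * e.im - d.im * e.re) = 0 := by linear_combination d.re * he2 - e.re * hd2
    have c3 : α * (d.re * e.im - d.im * e.re) = 0 := by rw [hα']; linear_combination c1 + s * c2
    exact (mul_eq_zero.1 c3).resolve_left hα.ne'
  have fin : (e.im - s * e.re) * (d.re ^ 2 + d.im ^ 2) = (d.im - s * d.re) * (e.re ^ 2 + e.im ^ 2) := by
    linear_combination (e.im - s * e.re) * ea' - (d.im - s * d.re) * eb' - 2 * (g.re + s * g.im) * cr0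
  have p1 : 0 < d.re ^ 2 + d.im ^ 2 := by
    rcases eq_or_ne d.re 0 with h0 | h0
    · rcases eq_or_ne d.im 0 with h1 | h1
      · rw [h0, h1] at hwd; simp at hwd
      · positivity
    · positivity
  have p2 : 0 ≤ e.re ^ 2 + e.im ^ 2 := by positivity
  nlinarith [mul_nonneg hwd.le p2, mul_pos p1 (neg_pos.2 hwe)]

open Classical in
theorem Cov.euler (hP : Cov P) (A A' : Finset ℂ) (hA : ∀ p ∈ A, p ∈ P)
    (hA' : ∀ p ∈ A, ∀ v ∈ Vor P p, ∀ r ∈ P, v ∈ Vor P r → r ∈ A') :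
    ∑ p ∈ A, (sides P p).ncard ≤ 6 * A'.card := by
  let sF : ℂ → Finset ℂ := fun p => (hP.sides_fin p).toFinset
  let f : ℂ → ℂ → ℂ := fun p q => ln p q (hi P p q)
  let V : Finset ℂ := A.biUnion fun p => (sF p).image (f p)
  obtain ⟨s, hu, hw⟩ := generic_slope V A'
  let N : ℂ → Finset ℂ := fun v => A'.filter fun r => r ∈ P ∧ v ∈ Vor P r
  let T : ℂ → ℂ → Prop := fun v p => ∀ x ∈ Vor P p, x.re + s * x.im ≤ v.re + s * v.im
  let Bt : ℂ → ℂ → Prop := fun v p => ∀ x ∈ Vor P p, v.re + s * v.im ≤ x.re + s * x.im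
  have memV : ∀ v ∈ V, ∃ p ∈ A, ∃ q ∈ sides P p, f p q = v := by
    intro v hv
    simpa [V, sF] using hv
  -- step 1
  have s1 : ∀ p ∈ A, (sides P p).ncard ≤ (V.filter fun v => v ∈ Vor P p).card := by
    intro p hp
    rw [Set.ncard_eq_toFinset_card _ (hP.sides_fin p)]
    apply Finset.card_le_card_of_injOn (f p)
    · intro q hq
      have hq' : q ∈ sides P p := by simpa using hq
      simp only [Finset.coe_filter, Set.mem_ofPred_eq]
      refine ⟨Finset.mem_biUnion.2 ⟨p, hp, Finset.mem_image_of_mem _ (by simpa [sF] using hq')⟩, ?_⟩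
      exact (hP.side hq').great.1
    · intro q hq q' hq' h
      have hq1 : q ∈ sides P p := by simpa using hq
      have hq2 : q' ∈ sides P p := by simpa using hq'
      exact (hP.side hq1).hi_inj (hP.side hq2) h
  have s2 : ∑ p ∈ A, (V.filter fun v => v ∈ Vor P p).card
      = ∑ v ∈ V, (A.filter fun p => v ∈ Vor P p).card := by
    simp only [Finset.card_filter]
    exact Finset.sum_comm
  have s3 : ∀ v ∈ V, (A.filter fun p => v ∈ Vor P p).card ≤ (N v).card := by
    intro v hv
    apply Finset.card_le_card
    intro p hp
    rw [Finset.mem_filter] at hp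
    rw [Finset.mem_filter]
    exact ⟨hA' p hp.1 v hp.2 p (hA p hp.1) hp.2, hA p hp.1, hp.2⟩
  have s4 : ∀ v ∈ V, 3 ≤ (N v).card := by
    intro v hv
    obtain ⟨p, hp, q, hq, rfl⟩ := memV v hv
    have S := hP.side hq
    obtain ⟨r, hr, hrp, hrq, hvr⟩ := S.third hP
    have hvp : f p q ∈ Vor P p := S.great.1
    have hvq : f p q ∈ Vor P q := vor_of_eq hvp (ln_D p q _)
    have mem : ∀ t ∈ P, f p q ∈ Vor P t → t ∈ N (f p q) := by
      intro t ht h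
      rw [Finset.mem_filter]
      exact ⟨hA' p hp _ hvp t ht h, ht, h⟩
    have hsub : ({p, q, r} : Finset ℂ) ⊆ N (f p q) := by
      intro t ht
      simp only [Finset.mem_insert, Finset.mem_singleton] at ht
      rcases ht with rfl | rfl | rfl
      · exact mem _ (hA _ hp) hvp
      · exact mem _ S.mem hvq
      · exact mem _ hr hvr
    have h3 : ({p, q, r} : Finset ℂ).card = 3 := by
      rw [Finset.card_eq_three]
      exact ⟨p, q, r, S.ne.symm, hrp.symm, hrq.symm, rfl⟩
    rw [← h3]
    exact Finset.card_le_card hsub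
  have s5 : ∀ v ∈ V, (N v).card ≤ 3 * ((N v).filter fun p => T v p ∨ Bt v p).card := by
    intro v hv
    have h3 := s4 v hv
    have hne : (N v).Nonempty := by
      rw [← Finset.card_pos]; omega
    obtain ⟨a, ha, hamin⟩ := Finset.exists_min_image (N v) (fun z => z.im - s * z.re) hne
    obtain ⟨b, hb, hbmax⟩ := Finset.exists_max_image (N v) (fun z => z.im - s * z.re) hne
    have hsub : (N v).filter (fun p => ¬ (T v p ∨ Bt v p)) ⊆ {a, b} := by
      intro p hp
      rw [Finset.mem_filter] at hp
      obtain ⟨hp, hn⟩ := hp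
      by_contra hc
      simp only [Finset.mem_insert, Finset.mem_singleton, not_or] at hc
      push Not at hn
      obtain ⟨hT, hB⟩ := hn
      simp only [T, Bt] at hT hB
      push Not at hT hB
      obtain ⟨x, hx, hx'⟩ := hT
      obtain ⟨y, hy, hy'⟩ := hB
      have hpa := hamin p hp
      have hpb := hbmax p hp
      rw [Finset.mem_filter] at hp ha hb
      refine no_mid hp.2.1 ha.2.1 hb.2.1 hp.2.2 ha.2.2 hb.2.2 hx hy hx' hy'
        (lt_of_le_of_ne hpa fun h => hc.1 (hw _ hp.1 _ ha.1 h.symm))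
        (lt_of_le_of_ne hpb fun h => hc.2 (hw _ hp.1 _ hb.1 h))
    have h2 := (Finset.card_le_card hsub).trans Finset.card_le_two
    have h4 := Finset.card_filter_add_card_filter_not (s := N v) (fun p => T v p ∨ Bt v p)
    omega
  have s6 : ∀ p ∈ A', (V.filter fun v => v ∈ Vor P p ∧ (T v p ∨ Bt v p)).card ≤ 2 := by
    intro p hp
    have hsub : (V.filter fun v => v ∈ Vor P p ∧ (T v p ∨ Bt v p)) ⊆
        (V.filter fun v => v ∈ Vor P p ∧ T v p) ∪ (V.filter fun v => v ∈ Vor P p ∧ Bt v p) := by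
      intro v hv
      simp only [Finset.mem_union, Finset.mem_filter] at hv ⊢
      tauto
    have c1 : (V.filter fun v => v ∈ Vor P p ∧ T v p).card ≤ 1 := by
      rw [Finset.card_le_one]
      intro v hv v' hv'
      rw [Finset.mem_filter] at hv hv'
      exact hu v hv.1 v' hv'.1 (le_antisymm (hv'.2.2 _ hv.2.1) (hv.2.2 _ hv'.2.1))
    have c2 : (V.filter fun v => v ∈ Vor P p ∧ Bt v p).card ≤ 1 := by
      rw [Finset.card_le_one]
      intro v hv v' hv'
      rw [Finset.mem_filter] at hv hv'
      exact hu v hv.1 v' hv'.1 (le_antisymm (hv.2.2 _ hv'.2.1) (hv'.2.2 _ hv.2.1))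
    exact (Finset.card_le_card hsub).trans ((Finset.card_union_le _ _).trans (by omega))
  have s7 : ∑ v ∈ V, ((N v).filter fun p => T v p ∨ Bt v p).card
      ≤ ∑ p ∈ A', (V.filter fun v => v ∈ Vor P p ∧ (T v p ∨ Bt v p)).card := by
    have e : ∀ v ∈ V, ((N v).filter fun p => T v p ∨ Bt v p).card ≤
        (A'.filter fun p => v ∈ Vor P p ∧ (T v p ∨ Bt v p)).card := by
      intro v _
      apply Finset.card_le_card
      intro p hp
      simp only [N, Finset.mem_filter] at hp ⊢
      tauto
    refine (Finset.sum_le_sum e).trans (le_of_eq ?_)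
    simp only [Finset.card_filter]
    exact Finset.sum_comm
  calc ∑ p ∈ A, (sides P p).ncard ≤ ∑ p ∈ A, (V.filter fun v => v ∈ Vor P p).card := Finset.sum_le_sum s1
    _ = ∑ v ∈ V, (A.filter fun p => v ∈ Vor P p).card := s2
    _ ≤ ∑ v ∈ V, (N v).card := Finset.sum_le_sum s3
    _ ≤ ∑ v ∈ V, 3 * ((N v).filter fun p => T v p ∨ Bt v p).card := Finset.sum_le_sum s5
    _ = 3 * ∑ v ∈ V, ((N v).filter fun p => T v p ∨ Bt v p).card := by rw [Finset.mul_sum]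
    _ ≤ 3 * ∑ p ∈ A', (V.filter fun v => v ∈ Vor P p ∧ (T v p ∨ Bt v p)).card := by gcongr
    _ ≤ 3 * ∑ p ∈ A', 2 := by gcongr with p hp; exact s6 p hp
    _ = 6 * A'.card := by rw [Finset.sum_const]; simp; ring
end

section
variable {P : Set ℂ}

def cSq (l : ℝ) : Set ℂ := {z | |z.re| < l ∧ |z.im| < l}

theorem vol_cSq {l : ℝ} (hl : 0 < l) : volume (cSq l) = ENNReal.ofReal (4 * l ^ 2) := by
  have h : cSq l = Complex.measurableEquivRealProd ⁻¹' (Set.Ioo (-l) l ×ˢ Set.Ioo (-l) l) := by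
    ext z
    simp [cSq, abs_lt, Complex.measurableEquivRealProd_apply]
  rw [h, Complex.volume_preserving_equiv_real_prod.measure_preimage
    (measurableSet_Ioo.prod measurableSet_Ioo).nullMeasurableSet, Measure.volume_eq_prod,
    Measure.prod_prod, Real.volume_Ioo, ← ENNReal.ofReal_mul (by linarith)]
  congr 1; ring

theorem vol_unit (p : ℂ) : volume (closedBall p 1) ≤ ENNReal.ofReal 4 := by
  rw [Complex.volume_closedBall]
  simp only [ENNReal.ofReal_one, one_pow, one_mul]
  rw [← ENNReal.ofReal_coe_nnreal]
  exact ENNReal.ofReal_le_ofReal (by simpa using Real.pi_le_four)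

open Classical in
theorem Cov.main (hP : Cov P) (p0 : ℂ)
    (hcell : ∀ p ∈ P, p ≠ p0 → volume (Vor P p) ≤ ENNReal.ofReal (TT + bb * (sides P p).ncard))
    {l : ℝ} (hl : 0 < l) (B : Finset ℂ)
    (hB : ∀ p, p ∈ B ↔ p ∈ P ∧ (closedBall p 1 ∩ cSq (l + 4)).Nonempty) :
    4 * l ^ 2 ≤ 4 + (1 + √3 / 2) * B.card := by
  let A := B.filter fun p => (closedBall p 1 ∩ cSq l).Nonempty
  have hAP : ∀ p ∈ A, p ∈ P := fun p hp => ((hB p).1 (Finset.mem_filter.1 hp).1).1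
  have hsq : ∀ z ∈ cSq l, z ∈ cSq (l + 4) := fun z hz => ⟨by linarith [hz.1], by linarith [hz.2]⟩
  have hE := hP.euler A B hAP (by
    intro p hp v hv r hr hvr
    obtain ⟨y, hy, hyl⟩ := (Finset.mem_filter.1 hp).2
    have d1 := hP.vor_le hv
    have d2 := hP.vor_le hvr
    rw [mem_closedBall] at hy
    have d3 : dist r y ≤ 3 := by
      have := dist_triangle r v y
      have := dist_triangle v p y
      rw [dist_comm] at d2 hy
      linarith
    rw [Complex.dist_eq] at d3
    have h1 := (Complex.abs_re_le_norm (r - y)).trans d3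
    have h2 := (Complex.abs_im_le_norm (r - y)).trans d3
    refine (hB r).2 ⟨hr, r, mem_closedBall_self zero_le_one, ?_, ?_⟩
    · have := abs_add_le (r - y).re y.re
      simp only [Complex.sub_re, sub_add_cancel] at this h1
      linarith [hyl.1]
    · have := abs_add_le (r - y).im y.im
      simp only [Complex.sub_im, sub_add_cancel] at this h2
      linarith [hyl.2])
  have hcov : cSq l ⊆ ⋃ p ∈ A, Vor P p := by
    intro z hz
    obtain ⟨p, hp, hzp⟩ := hP.exists_vor z
    have hd := hP.vor_le hzp
    simp only [Set.mem_iUnion]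
    refine ⟨p, ?_, hzp⟩
    have hz' : z ∈ closedBall p 1 := mem_closedBall.2 hd
    exact Finset.mem_filter.2 ⟨(hB p).2 ⟨hp, z, hz', hsq z hz⟩, z, hz', hz⟩
  have hcell' : ∀ p ∈ A, volume (Vor P p) ≤
      ENNReal.ofReal ((TT + bb * (sides P p).ncard) + if p = p0 then 4 else 0) := by
    intro p hp
    have hpos : 0 ≤ TT + bb * (sides P p).ncard := by
      have := TT_pos; have := bb_pos; positivity
    split_ifs with h
    · refine (measure_mono ?_).trans ((vol_unit p).trans (ENNReal.ofReal_le_ofReal (by linarith)))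
      intro z hz
      exact mem_closedBall.2 (hP.vor_le hz)
    · rw [add_zero]
      exact hcell p (hAP p hp) h
  have hv : ENNReal.ofReal (4 * l ^ 2) ≤ ENNReal.ofReal
      (∑ p ∈ A, ((TT + bb * (sides P p).ncard) + if p = p0 then 4 else 0)) := by
    rw [← vol_cSq hl, ENNReal.ofReal_sum_of_nonneg]
    · exact (measure_mono hcov).trans ((measure_biUnion_finset_le _ _).trans (Finset.sum_le_sum hcell'))
    · intro p _
      have := TT_pos; have := bb_pos
      split_ifs <;> positivity
  have hTT := TT_pos
  have hbb := bb_pos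
  rw [ENNReal.ofReal_le_ofReal_iff (by
    apply Finset.sum_nonneg; intro p _; split_ifs <;> positivity)] at hv
  rw [Finset.sum_add_distrib, Finset.sum_add_distrib, ← Finset.mul_sum, Finset.sum_const,
    nsmul_eq_mul, ← Nat.cast_sum, Finset.sum_ite_eq'] at hv
  have h4 : (if p0 ∈ A then (4 : ℝ) else 0) ≤ 4 := by split_ifs <;> norm_num
  have hAB : (A.card : ℝ) ≤ B.card := by exact_mod_cast Finset.card_filter_le _ _
  have hE' : ((∑ p ∈ A, (sides P p).ncard : ℕ) : ℝ) ≤ 6 * B.card := by exact_mod_cast hE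
  rw [← TT_eq]
  have := mul_le_mul_of_nonneg_left hE' hbb.le
  have := mul_le_mul_of_nonneg_right hAB hTT.le
  nlinarith

def toC (x : Pt) : ℂ := ⟨x 0, x 1⟩

theorem dist_toC (x y : Pt) : dist (toC x) (toC y) = dist x y := by
  rw [Complex.dist_eq_re_im, EuclideanSpace.dist_eq]
  simp [toC, Fin.sum_univ_two, Real.dist_eq, sq_abs]

theorem toC_surj (z : ℂ) : ∃ x : Pt, toC x = z := ⟨!₂[z.re, z.im], by simp [toC]⟩

theorem cell_of_angle (hP : Cov P) {x y z : Pt} (hx : toC x ∈ P) (hy : toC y ∈ P) (hz : toC z ∈ P)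
    (h1 : 0 < dist y x) (h1' : dist y x ≤ 1) (h2 : 0 < dist z y) (h2' : dist z y ≤ 1)
    (ha : 2 * π / 3 ≤ EuclideanGeometry.angle x y z) :
    volume (Vor P (toC y)) ≤ ENNReal.ofReal (TT + bb * (sides P (toC y)).ncard) := by
  have hpi := Real.pi_pos
  have n1 : ‖toC x - toC y‖ = dist y x := by rw [← Complex.dist_eq, dist_toC, dist_comm]
  have n2 : ‖toC z - toC y‖ = dist z y := by rw [← Complex.dist_eq, dist_toC]
  have hc : cos (EuclideanGeometry.angle x y z) ≤ -1 / 2 := by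
    have e : cos (2 * π / 3) = -1 / 2 := by
      rw [show 2 * π / 3 = π - π / 3 by ring, Real.cos_pi_sub, Real.cos_pi_div_three]; norm_num
    rw [← e]
    exact Real.cos_le_cos_of_nonneg_of_le_pi (by positivity) (EuclideanGeometry.angle_le_pi _ _ _) ha
  have hin : (toC x - toC y).re * (toC z - toC y).re + (toC x - toC y).im * (toC z - toC y).im
      = cos (EuclideanGeometry.angle x y z) * (dist y x * dist z y) := by
    have := InnerProductGeometry.cos_angle_mul_norm_mul_norm (x - y) (z - y)
    rw [← dist_eq_norm, ← dist_eq_norm, dist_comm x y] at this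
    unfold EuclideanGeometry.angle
    simp only [vsub_eq_sub]
    rw [this]
    simp [toC, PiLp.inner_apply, Fin.sum_univ_two]
    ring
  have side : ∀ (Q : ℂ) (r : ℝ), toC y + Q ∈ P → ‖Q‖ = r → 0 < r → r ≤ 1 → ∀ w ∈ Vor P (toC y),
      (w - toC y).re * cos Q.arg + (w - toC y).im * sin Q.arg ≤ 1 / 2 := by
    intro Q r hQ hr h0 h1 w hw
    have := hw _ hQ
    have c1 := Complex.norm_mul_cos_arg Q
    have c2 := Complex.norm_mul_sin_arg Q
    rw [hr] at c1 c2
    unfold D at this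
    simp only [Complex.add_re, Complex.add_im, ← c1, ← c2] at this
    simp only [Complex.sub_re, Complex.sub_im]
    have cs := Real.sin_sq_add_cos_sq Q.arg
    have h3 : r * ((w.re - (toC y).re) * cos Q.arg + (w.im - (toC y).im) * sin Q.arg) ≤ r * (r / 2) := by
      nlinarith
    have := le_of_mul_le_mul_left h3 h0
    linarith
  refine hP.cell_area hy (a := (toC x - toC y).arg) (a' := (toC z - toC y).arg) ?_ ?_
  · rw [Real.cos_sub]
    rw [← Complex.norm_mul_cos_arg (toC x - toC y), ← Complex.norm_mul_sin_arg (toC x - toC y),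
      ← Complex.norm_mul_cos_arg (toC z - toC y), ← Complex.norm_mul_sin_arg (toC z - toC y), n1, n2] at hin
    have hpp : 0 < dist y x * dist z y := mul_pos h1 h2
    have h3 : (dist y x * dist z y) * (cos (toC x - toC y).arg * cos (toC z - toC y).arg +
        sin (toC x - toC y).arg * sin (toC z - toC y).arg) ≤ (dist y x * dist z y) * (-1 / 2) := by
      nlinarith
    exact le_of_mul_le_mul_left h3 hpp
  · intro w hw
    exact ⟨side _ _ (by simpa using hx) n1 h1 h1' w hw, side _ _ (by simpa using hz) n2 h2 h2' w hw⟩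

theorem meets_iff (x : Pt) (l : ℝ) : (closedBall (toC x) 1 ∩ cSq l).Nonempty ↔
    (closedBall x 1 ∩ openSquare l).Nonempty := by
  constructor
  · rintro ⟨z, hz, hl⟩
    obtain ⟨y, rfl⟩ := toC_surj z
    exact ⟨y, by rw [mem_closedBall] at hz ⊢; rwa [dist_toC] at hz, hl⟩
  · rintro ⟨y, hy, hl⟩
    exact ⟨toC y, by rw [mem_closedBall] at hy ⊢; rwa [dist_toC], hl⟩

theorem Ncount_mono (C : ℕ → Pt) {l m : ℝ} (h : l ≤ m) : Ncount C l ≤ Ncount C m := by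
  unfold Ncount
  refine ENat.toENNReal_mono (Set.encard_le_encard ?_)
  rintro i ⟨x, hx, h1, h2⟩
  exact ⟨x, hx, h1.trans_le h, h2.trans_le h⟩

theorem lim_main (K : ℝ) : Tendsto (fun l : ℝ => (4 * (l - 4) ^ 2 - 4) / K * π / (4 * l ^ 2)) atTop
    (nhds (π / K)) := by
  have h0 : Tendsto (fun l : ℝ => l⁻¹) atTop (nhds 0) := tendsto_inv_atTop_zero
  have h1 : Tendsto (fun l : ℝ => π / K * ((1 - 4 * l⁻¹) ^ 2 - (l⁻¹) ^ 2)) atTop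
      (nhds (π / K * ((1 - 4 * 0) ^ 2 - 0 ^ 2))) :=
    (((tendsto_const_nhds.sub (h0.const_mul 4)).pow 2).sub (h0.pow 2)).const_mul _
  have e : π / K * ((1 - 4 * 0) ^ 2 - 0 ^ 2) = π / K := by ring
  rw [e] at h1
  refine h1.congr' ?_
  filter_upwards [eventually_gt_atTop 0] with l hl
  field_simp

theorem cov_of_finite (C : ℕ → Pt) (hcover : (⋃ n, closedBall (C n) 1) = Set.univ)
    (hfin : ∀ l, Ncount C l ≠ ⊤) : Cov (Set.range fun n => toC (C n)) := by
  have hI : ∀ l, {i | (closedBall (C i) 1 ∩ openSquare l).Nonempty}.Finite := by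
    intro l
    have := hfin l
    unfold Ncount at this
    rw [← Set.encard_ne_top_iff]
    simpa using this
  constructor
  · intro z r
    refine ((hI (‖z‖ + |r| + 1)).image fun n => toC (C n)).subset ?_
    rintro _ ⟨⟨n, rfl⟩, hn⟩
    refine ⟨n, ?_, rfl⟩
    rw [Set.mem_ofPred_eq, ← meets_iff]
    refine ⟨_, mem_closedBall_self zero_le_one, ?_⟩
    have hn' : ‖toC (C n)‖ ≤ ‖z‖ + |r| := by
      have h1 := mem_closedBall.1 hn
      rw [Complex.dist_eq] at h1
      have := norm_add_le (toC (C n) - z) z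
      rw [sub_add_cancel] at this
      linarith [le_abs_self r]
    exact ⟨by linarith [Complex.abs_re_le_norm (toC (C n))], by linarith [Complex.abs_im_le_norm (toC (C n))]⟩
  · intro z
    obtain ⟨x, rfl⟩ := toC_surj z
    have : x ∈ ⋃ n, closedBall (C n) 1 := by rw [hcover]; trivial
    obtain ⟨n, hn⟩ := Set.mem_iUnion.1 this
    exact ⟨_, ⟨n, rfl⟩, by rw [dist_toC]; exact hn⟩

end

/-- Lower bound for the density of a sequence covering of the plane by unit disks, each disk
containing the center of the next, with no turn sharper than `2π/3`. -/
theorem lower_density_ge (C : ℕ → Pt)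
    (hcover : (⋃ n, closedBall (C n) 1) = Set.univ)
    (hdist : ∀ n, 1 ≤ n → 0 < dist (C n) (C (n - 1)) ∧ dist (C n) (C (n - 1)) ≤ 1)
    (hangle : ∀ n, 1 ≤ n →
      2 * π / 3 ≤ EuclideanGeometry.angle (C (n - 1)) (C n) (C (n + 1))) :
    ENNReal.ofReal (2 * π / (2 + Real.sqrt 3)) ≤ lowerDensity C := by
  classical
  have hK : 0 < 1 + √3 / 2 := by positivity
  have eK : 2 * π / (2 + √3) = π / (1 + √3 / 2) := by field_simp
  have hlim := ENNReal.tendsto_ofReal (lim_main (1 + √3 / 2))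
  rw [eK, ← hlim.liminf_eq]
  unfold lowerDensity
  refine liminf_le_liminf ?_
  by_cases hfin : ∀ l, Ncount C l ≠ ⊤
  · have hP := cov_of_finite C hcover hfin
    filter_upwards [eventually_gt_atTop 4] with l hl
    have hI : {i | (closedBall (C i) 1 ∩ openSquare l).Nonempty}.Finite := by
      have := hfin l
      unfold Ncount at this
      rw [← Set.encard_ne_top_iff]
      simpa using this
    have hmain := hP.main (toC (C 0)) (by
      rintro _ ⟨n, rfl⟩ hne
      have hn : 1 ≤ n := by
        rcases Nat.eq_zero_or_pos n with rfl | h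
        · exact absurd rfl hne
        · exact h
      have hd := hdist n hn
      have hd' := hdist (n + 1) (by omega)
      rw [Nat.add_sub_cancel] at hd'
      exact cell_of_angle hP ⟨n - 1, rfl⟩ ⟨n, rfl⟩ ⟨n + 1, rfl⟩ hd.1 hd.2 hd'.1 hd'.2 (hangle n hn))
      (l := l - 4) (by linarith) (hI.toFinset.image fun n => toC (C n)) (by
        intro p
        rw [sub_add_cancel]
        simp only [Finset.mem_image, Set.Finite.mem_toFinset, Set.mem_ofPred_eq]
        constructor
        · rintro ⟨n, hn, rfl⟩
          exact ⟨⟨n, rfl⟩, (meets_iff _ _).2 hn⟩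
        · rintro ⟨⟨n, rfl⟩, hn⟩
          exact ⟨n, (meets_iff _ _).1 hn, rfl⟩)
    have hcard : ((hI.toFinset.image fun n => toC (C n)).card : ℝ) ≤ hI.toFinset.card := by
      exact_mod_cast Finset.card_image_le
    have hN : Ncount C l = ENNReal.ofReal (hI.toFinset.card : ℝ) := by
      unfold Ncount
      rw [hI.encard_eq_coe_toFinset_card, ENNReal.ofReal_natCast]
      simp
    have hpos : 0 < 4 * l ^ 2 := by positivity
    rw [hN, ← ENNReal.ofReal_mul (by positivity), ← ENNReal.ofReal_div_of_pos hpos]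
    apply ENNReal.ofReal_le_ofReal
    have hpi := Real.pi_pos
    gcongr
    rw [div_le_iff₀ hK]
    nlinarith
  · push Not at hfin
    obtain ⟨m, hm⟩ := hfin
    filter_upwards [eventually_ge_atTop m] with l hl
    have : Ncount C l = ⊤ := top_le_iff.1 (hm ▸ Ncount_mono C hl)
    rw [this, ENNReal.top_mul (by simpa using Real.pi_pos), ENNReal.top_div_of_ne_top ENNReal.ofReal_ne_top]
    exact le_top
end
end

section
/- There exists a sequence C : ℕ → ℝ² such that: (i) ⋃ₙ closedBall(C n, 1) = ℝ²; (ii) for every n ≥ 1, 0 < dist(C n, C (n−1)) ≤ 1; (iii) for every n ≥ 1, the undirected Euclidean angle ∠ C(n−1) C(n) C(n+1) is at least 2π/3; and (iv) limsup_{λ→∞} N_C(λ)·π/(4λ²) ≤ 2π/(2+√3), the limsup being computed in the extended nonnegative reals. -/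
open Metric MeasureTheory Filter Real
open scoped ENNReal

noncomputable section

namespace Spiral

/-- Distance between neighbouring rows. -/
def h : ℝ := 1 + Real.sqrt 3 / 2

lemma h_pos : 0 < h := by unfold h; positivity
lemma h_lt : h < 1.867 := by
  have : Real.sqrt 3 < 1.734 := by
    rw [Real.sqrt_lt' (by norm_num)]; norm_num
  unfold h; linarith
lemma h_gt : 1.866 < h := by
  have : (1.732 : ℝ) < Real.sqrt 3 := by
    rw [Real.lt_sqrt (by norm_num)]; norm_num
  unfold h; linarith

/-- Distance of side `m` from the origin. -/
def e (m : ℕ) : ℝ := h * (2 * m - 1) / 8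

/-- The rotation frames. -/
def cs : ℕ → ℝ × ℝ
  | 0 => (1, 0)
  | m + 1 => (-(cs m).2, (cs m).1)

lemma cs_or (m : ℕ) : ((cs m).1 = 0 ∧ ((cs m).2 = 1 ∨ (cs m).2 = -1)) ∨
    ((cs m).2 = 0 ∧ ((cs m).1 = 1 ∨ (cs m).1 = -1)) := by
  induction m with
  | zero => simp [cs]
  | succ m ih =>
    simp only [cs]
    rcases ih with ⟨h1, h2 | h2⟩ | ⟨h1, h2 | h2⟩ <;> simp [h1, h2]

lemma cs_sq (m : ℕ) : (cs m).1 ^ 2 + (cs m).2 ^ 2 = 1 := by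
  rcases cs_or m with ⟨h1, h2 | h2⟩ | ⟨h1, h2 | h2⟩ <;> simp [h1, h2]

def F (m : ℕ) (x y : ℝ) : Pt :=
  !₂[(cs m).1 * x + (cs m).2 * y, -(cs m).2 * x + (cs m).1 * y]

@[simp] lemma F_zero (m : ℕ) (x y : ℝ) : F m x y 0 = (cs m).1 * x + (cs m).2 * y := by
  simp [F]
@[simp] lemma F_one (m : ℕ) (x y : ℝ) : F m x y 1 = -(cs m).2 * x + (cs m).1 * y := by
  simp [F]

lemma F_succ (m : ℕ) (x y : ℝ) : F (m + 1) x y = F m y (-x) := by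
  ext i; fin_cases i <;> simp [F, cs] <;> ring

lemma F_succ' (m : ℕ) (x y : ℝ) : F m x y = F (m + 1) (-y) x := by
  rw [F_succ]; simp

lemma F_four (m : ℕ) (x y : ℝ) : F (m + 4) x y = F m x y := by
  rw [F_succ, F_succ, F_succ, F_succ]; simp

lemma dist_F (m : ℕ) (x y x' y' : ℝ) :
    dist (F m x y) (F m x' y') = Real.sqrt ((x - x') ^ 2 + (y - y') ^ 2) := by
  rw [EuclideanSpace.dist_eq]
  congr 1
  simp only [Fin.sum_univ_two, F_zero, F_one, Real.dist_eq, sq_abs]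
  have := cs_sq m
  linear_combination ((x - x') ^ 2 + (y - y') ^ 2) * this

lemma mem_of_F (m : ℕ) (x y x' y' : ℝ) (hh : (x - x') ^ 2 + (y - y') ^ 2 ≤ 1) :
    F m x y ∈ closedBall (F m x' y') 1 := by
  rw [mem_closedBall, dist_F]
  exact Real.sqrt_le_one.mpr hh

lemma dist_ok (m : ℕ) (x y x' y' : ℝ) (h1 : (x - x') ^ 2 + (y - y') ^ 2 ≤ 1)
    (h0 : 0 < (x - x') ^ 2 + (y - y') ^ 2) :
    0 < dist (F m x y) (F m x' y') ∧ dist (F m x y) (F m x' y') ≤ 1 := by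
  rw [dist_F]
  exact ⟨Real.sqrt_pos.mpr h0, Real.sqrt_le_one.mpr h1⟩

lemma F_sub (m : ℕ) (x y x' y' : ℝ) : F m x y - F m x' y' = F m (x - x') (y - y') := by
  ext i; fin_cases i <;> simp [F] <;> ring

lemma F_norm (m : ℕ) (x y : ℝ) : ‖F m x y‖ = Real.sqrt (x ^ 2 + y ^ 2) := by
  rw [EuclideanSpace.norm_eq]
  congr 1
  simp only [Fin.sum_univ_two, F_zero, F_one, Real.norm_eq_abs, sq_abs]
  have := cs_sq m
  linear_combination (x ^ 2 + y ^ 2) * this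

lemma F_inner (m : ℕ) (x y x' y' : ℝ) : inner ℝ (F m x y) (F m x' y') = x * x' + y * y' := by
  rw [PiLp.inner_apply]
  simp only [Fin.sum_univ_two, F_zero, F_one, RCLike.inner_apply, conj_trivial]
  have := cs_sq m
  linear_combination (x * x' + y * y') * this

lemma angle_ok (m : ℕ) (x0 y0 x1 y1 x2 y2 : ℝ)
    (hpos : 0 < (x1 - x0) * (x2 - x1) + (y1 - y0) * (y2 - y1))
    (hle : ((x1 - x0) ^ 2 + (y1 - y0) ^ 2) * ((x2 - x1) ^ 2 + (y2 - y1) ^ 2) ≤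
      4 * ((x1 - x0) * (x2 - x1) + (y1 - y0) * (y2 - y1)) ^ 2) :
    2 * π / 3 ≤ EuclideanGeometry.angle (F m x0 y0) (F m x1 y1) (F m x2 y2) := by
  unfold EuclideanGeometry.angle InnerProductGeometry.angle
  rw [vsub_eq_sub, vsub_eq_sub, F_sub, F_sub, F_inner, F_norm, F_norm]
  have hcos : Real.arccos (-(1 / 2)) = 2 * π / 3 := by
    rw [Real.arccos_neg, ← Real.cos_pi_div_three, Real.arccos_cos] <;> linarith [Real.pi_pos]
  rw [← hcos]
  apply Real.arccos_le_arccos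
  rw [← Real.sqrt_mul (by positivity)]
  set I := (x1 - x0) * (x2 - x1) + (y1 - y0) * (y2 - y1) with hI
  have e1 : (x0 - x1) * (x2 - x1) + (y0 - y1) * (y2 - y1) = -I := by rw [hI]; ring
  have e2 : (x0 - x1) ^ 2 + (y0 - y1) ^ 2 = (x1 - x0) ^ 2 + (y1 - y0) ^ 2 := by ring
  rw [e1, e2]
  set A := ((x1 - x0) ^ 2 + (y1 - y0) ^ 2) * ((x2 - x1) ^ 2 + (y2 - y1) ^ 2) with hA
  have hAI : I ^ 2 ≤ A := by
    rw [hI, hA]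
    nlinarith [sq_nonneg ((x1 - x0) * (y2 - y1) - (y1 - y0) * (x2 - x1))]
  have hApos : 0 < A := lt_of_lt_of_le (by positivity) hAI
  have hs : Real.sqrt A ≤ 2 * I := by
    rw [Real.sqrt_le_left (by positivity)]; linarith
  have hsp : 0 < Real.sqrt A := Real.sqrt_pos.mpr hApos
  rw [div_le_iff₀ hsp]
  linarith

/-- start of row -/
def S : ℕ → ℝ
  | 0 => -e 3
  | m + 1 => -e m

/-- left grid point -/
def a (m : ℕ) : ℝ := ⌊S m - m / 8⌋ + (m : ℝ) / 8

/-- number of steps in row -/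
def K (m : ℕ) : ℕ := ⌈e (m + 1) - a m⌉₊

def xr (m j : ℕ) : ℝ := min (e (m + 1)) (max (S m) (a m + j))

def lx : ℕ → ℝ
  | 0 => 0
  | 1 => 1
  | 2 => 3 / 2
  | 3 => 3 / 2
  | 4 => 1
  | 5 => 1 / 2
  | _ => 0

def ly : ℕ → ℝ
  | 0 => 0
  | 1 => 0
  | 2 => 1 / 2
  | 3 => 1
  | 4 => 3 / 2
  | 5 => 3 / 2
  | 6 => 1
  | _ => 0

def L (m : ℕ) : ℕ := K m + 7

def P (m j : ℕ) : Pt := F m (xr m j + lx (j - K m)) (e m + ly (j - K m))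

lemma S_lt (m : ℕ) : S m < e (m + 1) := by
  have := h_pos
  cases m with
  | zero => simp only [S, e]; push_cast; linarith
  | succ m =>
    simp only [S, e]; push_cast
    have : 0 ≤ h * m := by positivity
    nlinarith

lemma a_le (m : ℕ) : a m ≤ S m := by
  unfold a; linarith [Int.floor_le (S m - m / 8)]
lemma a_gt (m : ℕ) : S m < a m + 1 := by
  unfold a; linarith [Int.lt_floor_add_one (S m - m / 8)]

lemma K_pos (m : ℕ) : 1 ≤ K m := by
  unfold K
  rw [Nat.one_le_ceil_iff]
  linarith [a_le m, S_lt m]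

lemma le_aK (m : ℕ) : e (m + 1) ≤ a m + K m := by
  have := Nat.le_ceil (e (m + 1) - a m)
  unfold K; linarith

lemma K_lt (m : ℕ) : (K m : ℝ) < e (m + 1) - a m + 1 := by
  unfold K
  exact Nat.ceil_lt_add_one (by linarith [a_le m, S_lt m])

lemma xr_zero (m : ℕ) : xr m 0 = S m := by
  unfold xr
  have := a_le m
  have := S_lt m
  rw [max_eq_left (by simpa using a_le m), min_eq_right (by linarith)]

lemma xr_end (m j : ℕ) (hj : K m ≤ j) : xr m j = e (m + 1) := by
  unfold xr
  have h1 := le_aK m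
  have h2 : (K m : ℝ) ≤ j := by exact_mod_cast hj
  exact min_eq_left (le_max_of_le_right (by linarith))

lemma xr_step (m j : ℕ) (hj : j < K m) : 0 < xr m (j + 1) - xr m j ∧ xr m (j + 1) - xr m j ≤ 1 := by
  have h1 : a m + j < e (m + 1) := by
    have := Nat.lt_ceil.mp hj
    linarith
  have h2 := S_lt m
  have h3 := a_gt m
  have h4 : (0 : ℝ) ≤ j := by positivity
  have e1 : xr m j = max (S m) (a m + j) := min_eq_right (max_le h2.le h1.le)
  have e2 : xr m (j + 1) = min (e (m + 1)) (a m + (j + 1)) := by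
    unfold xr; push_cast
    rw [max_eq_right (by linarith)]
  rw [e1, e2]
  constructor
  · rw [sub_pos]
    exact max_lt (lt_min h2 (by linarith)) (lt_min h1 (by linarith))
  · have := le_max_right (S m) (a m + j)
    have := min_le_right (e (m + 1)) (a m + (j + 1))
    linarith

lemma P_L (m : ℕ) : P m (L m) = P (m + 1) 0 := by
  unfold P L
  rw [xr_end m _ (by omega), xr_zero, F_succ]
  simp [lx, ly, S]

lemma P_row (m j : ℕ) (hj : j ≤ K m) : P m j = F m (xr m j) (e m) := by
  unfold P; rw [Nat.sub_eq_zero_of_le hj]; simp [lx, ly]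

lemma P_loop (m i : ℕ) : P m (K m + i) = F m (e (m + 1) + lx i) (e m + ly i) := by
  unfold P; rw [xr_end m _ (by omega)]; simp

lemma P_dist (m j : ℕ) (hj : j < L m) :
    0 < dist (P m (j + 1)) (P m j) ∧ dist (P m (j + 1)) (P m j) ≤ 1 := by
  rcases lt_or_ge j (K m) with hk | hk
  · rw [P_row m j hk.le, P_row m (j + 1) hk]
    have := xr_step m j hk
    apply dist_ok <;> nlinarith
  · obtain ⟨i, rfl⟩ := Nat.exists_eq_add_of_le hk
    rw [add_assoc, P_loop, P_loop]
    unfold L at hj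
    have : i < 7 := by omega
    interval_cases i <;> apply dist_ok <;> simp only [lx, ly] <;> ring_nf <;> norm_num

lemma P_angle (m j : ℕ) (hj : j + 1 < L m) :
    2 * π / 3 ≤ EuclideanGeometry.angle (P m j) (P m (j + 1)) (P m (j + 2)) := by
  rcases lt_or_ge (j + 1) (K m) with hk | hk
  · rw [P_row m j (by omega), P_row m (j + 1) hk.le, P_row m (j + 2) hk]
    obtain ⟨h1, -⟩ := xr_step m j (by omega)
    obtain ⟨h2, -⟩ := xr_step m (j + 1) hk
    have := mul_pos h1 h2
    apply angle_ok <;> simp only [sub_self] <;> nlinarith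
  rcases lt_or_ge j (K m) with hk2 | hk2
  · have hK : j + 1 = K m := by omega
    have e2 : P m (j + 2) = F m (e (m + 1) + 1) (e m) := by
      have := P_loop m 1
      rw [← hK] at this
      simpa [lx, ly] using this
    rw [e2, P_row m j (by omega), P_row m (j + 1) (by omega)]
    obtain ⟨h1, -⟩ := xr_step m j (by omega)
    rw [xr_end m (j + 1) hk] at *
    apply angle_ok <;> nlinarith
  · obtain ⟨i, rfl⟩ := Nat.exists_eq_add_of_le hk2
    rw [add_assoc, add_assoc, P_loop, P_loop, P_loop]
    unfold L at hj
    have : i < 6 := by omega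
    interval_cases i <;> apply angle_ok <;> simp only [lx, ly] <;> ring_nf <;> norm_num

lemma P_angle_cross (m : ℕ) :
    2 * π / 3 ≤ EuclideanGeometry.angle (P m (K m + 6)) (P (m + 1) 0) (P (m + 1) 1) := by
  have := K_pos (m + 1)
  rw [P_loop, P_row _ 0 (by omega), P_row _ 1 this, F_succ' m]
  have h1 := (xr_step (m + 1) 0 this).1
  rw [xr_zero] at *
  simp only [S, lx, ly, zero_add] at *
  apply angle_ok <;> nlinarith

/-! ### State machine -/

def step (s : ℕ × ℕ) : ℕ × ℕ := if s.2 + 1 < L s.1 then (s.1, s.2 + 1) else (s.1 + 1, 0)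

def st : ℕ → ℕ × ℕ
  | 0 => (0, 0)
  | n + 1 => step (st n)

def T (m : ℕ) : ℕ := ∑ i ∈ Finset.range m, L i

lemma T_succ (m : ℕ) : T (m + 1) = T m + L m := Finset.sum_range_succ _ _

lemma st_spec (n : ℕ) : (st n).2 < L (st n).1 ∧ n = T (st n).1 + (st n).2 := by
  induction n with
  | zero => simp [st, T, L]
  | succ n ih =>
    simp only [st, step]
    split_ifs with hc
    · exact ⟨hc, by simp only; omega⟩
    · refine ⟨by simp [L], ?_⟩
      simp only [T_succ]; omega

lemma T_mono : Monotone T := monotone_nat_of_le_succ (fun m => by rw [T_succ]; omega)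

lemma st_T (m j : ℕ) (hj : j < L m) : st (T m + j) = (m, j) := by
  obtain ⟨h1, h2⟩ := st_spec (T m + j)
  set s := st (T m + j) with hs
  have hm : s.1 = m := by
    rcases lt_trichotomy s.1 m with hlt | heq | hgt
    · have := T_mono (Nat.succ_le_of_lt hlt)
      rw [Nat.succ_eq_add_one, T_succ] at this; omega
    · exact heq
    · have := T_mono (Nat.succ_le_of_lt hgt)
      rw [Nat.succ_eq_add_one, T_succ] at this; omega
  rw [hm] at h2
  exact Prod.ext hm (by simp only; omega)

def C (n : ℕ) : Pt := P (st n).1 (st n).2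

lemma C_T (m j : ℕ) (hj : j < L m) : C (T m + j) = P m j := by
  unfold C; rw [st_T m j hj]

lemma C_succ (n : ℕ) : C (n + 1) = P (st n).1 ((st n).2 + 1) := by
  have := (st_spec n).1
  simp only [C, st, step]
  split_ifs with hc
  · rfl
  · have : (st n).2 + 1 = L (st n).1 := by omega
    rw [this, P_L]

lemma C_dist (n : ℕ) : 0 < dist (C (n + 1)) (C n) ∧ dist (C (n + 1)) (C n) ≤ 1 := by
  rw [C_succ]; exact P_dist _ _ (st_spec n).1

lemma C_angle (n : ℕ) : 2 * π / 3 ≤ EuclideanGeometry.angle (C n) (C (n + 1)) (C (n + 2)) := by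
  have h0 := (st_spec n).1
  rw [C_succ (n + 1)]
  by_cases hc : (st n).2 + 1 < L (st n).1
  · have : st (n + 1) = ((st n).1, (st n).2 + 1) := by simp [st, step, hc]
    rw [C_succ, this]
    exact P_angle _ _ hc
  · have h1 : st (n + 1) = ((st n).1 + 1, 0) := by simp [st, step, hc]
    have h2 : (st n).2 = K (st n).1 + 6 := by unfold L at *; omega
    have e1 : C (n + 1) = P ((st n).1 + 1) 0 := by unfold C; rw [h1]
    have e0 : C n = P (st n).1 (K (st n).1 + 6) := by unfold C; rw [← h2]
    rw [h1, e1, e0]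
    exact P_angle_cross _

/-! ### Covering -/

def cov (p : Pt) : Prop := ∃ m j, j < L m ∧ p ∈ closedBall (P m j) 1

lemma row_pt (m : ℕ) (i : ℤ) (x : ℝ) (h1 : S m ≤ x) (h2 : x ≤ e (m + 1)) :
    ∃ j, j ≤ K m ∧ |x - xr m j| ≤ |x - (i + (m : ℝ) / 8)| := by
  set f := ⌊S m - m / 8⌋ with hf
  have ha : a m = f + (m : ℝ) / 8 := rfl
  rcases le_or_gt i f with hi | hi
  · refine ⟨0, by omega, ?_⟩
    rw [xr_zero]
    have : (i : ℝ) ≤ f := by exact_mod_cast hi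
    have := a_le m
    rw [abs_of_nonneg (by linarith), abs_of_nonneg (by linarith)]; linarith
  rcases le_or_gt (f + K m) i with hi2 | hi2
  · refine ⟨K m, le_rfl, ?_⟩
    rw [xr_end m _ le_rfl]
    have : (f + K m : ℝ) ≤ i := by exact_mod_cast hi2
    have := le_aK m
    rw [abs_of_nonpos (by linarith), abs_of_nonpos (by linarith)]; linarith
  · obtain ⟨j, hj⟩ := Int.eq_ofNat_of_zero_le (show 0 ≤ i - f by omega)
    refine ⟨j, by omega, ?_⟩
    have hjr : (i : ℝ) = f + j := by
      have : i = f + j := by omega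
      rw [this]; push_cast; rfl
    have : a m + j = i + (m : ℝ) / 8 := by rw [ha, hjr]; ring
    unfold xr
    rw [this]
    set z := (i : ℝ) + (m : ℝ) / 8
    rcases le_total (S m) z with q1 | q1
    · rw [max_eq_right q1]
      rcases le_total (e (m + 1)) z with q2 | q2
      · rw [min_eq_left q2, abs_of_nonpos (by linarith), abs_of_nonpos (by linarith)]; linarith
      · rw [min_eq_right q2]
    · rw [max_eq_left q1, min_eq_right (S_lt m).le, abs_of_nonneg (by linarith),
        abs_of_nonneg (by linarith)]; linarith

lemma cov_row (m : ℕ) (i : ℤ) (x y : ℝ) (h1 : S m ≤ x) (h2 : x ≤ e (m + 1))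
    (hd : (x - (i + (m : ℝ) / 8)) ^ 2 + (y - e m) ^ 2 ≤ 1) : cov (F m x y) := by
  obtain ⟨j, hj, hle⟩ := row_pt m i x h1 h2
  refine ⟨m, j, by unfold L; omega, ?_⟩
  rw [P_row m j hj]
  apply mem_of_F
  have := sq_le_sq.mpr hle
  linarith

lemma chord (g η : ℝ) (g0 : 0 ≤ g) (g1 : g ≤ 1 / 2) (y0 : 0 ≤ η) (y1 : η ≤ h) :
    g ^ 2 + η ^ 2 ≤ 1 ∨ (1 / 2 - g) ^ 2 + (h - η) ^ 2 ≤ 1 := by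
  have key : ∀ κ : ℝ, 1 + κ ^ 2 = 4 * κ → 0 < κ → ∀ g η : ℝ, 0 ≤ g → g ≤ 1 / 2 → 0 ≤ η →
      η ≤ 1 - κ * g → g ^ 2 + η ^ 2 ≤ 1 := by
    intro κ hκ hκ0 g η g0 g1 y0 y1
    have h1 : η ^ 2 ≤ (1 - κ * g) ^ 2 := by gcongr
    have h2 : g ^ 2 + (1 - κ * g) ^ 2 = 1 - 4 * κ * (g * (1 / 2 - g)) := by
      linear_combination g ^ 2 * hκ
    have h3 : 0 ≤ 4 * κ * (g * (1 / 2 - g)) := by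
      have : 0 ≤ 1 / 2 - g := by linarith
      positivity
    linarith
  have hs : Real.sqrt 3 ^ 2 = 3 := Real.sq_sqrt (by norm_num)
  have hh : h = 1 + Real.sqrt 3 / 2 := rfl
  have hlt := h_lt
  have hκ : 1 + (2 - Real.sqrt 3) ^ 2 = 4 * (2 - Real.sqrt 3) := by nlinarith
  have hκ0 : 0 < 2 - Real.sqrt 3 := by linarith
  rcases le_total η (1 - (2 - Real.sqrt 3) * g) with hc | hc
  · left; exact key _ hκ hκ0 g η g0 g1 y0 hc
  · right
    exact key _ hκ hκ0 (1 / 2 - g) (h - η) (by linarith) (by linarith) (by linarith)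
      (by rw [hh]; linarith)

lemma e_four (m : ℕ) : e (m + 4) = e m + h := by unfold e; push_cast; ring

lemma e_mono (m : ℕ) : e m ≤ e (m + 1) := by
  unfold e; push_cast; linarith [h_pos]

lemma cov_pair (k : ℕ) (x y : ℝ) (h1 : S k ≤ x) (h1' : S (k + 4) ≤ x) (h2 : x ≤ e (k + 1))
    (y1 : e k ≤ y) (y2 : y ≤ e (k + 4)) : cov (F k x y) := by
  have h4 := e_four k
  have h2' : x ≤ e (k + 4 + 1) := by
    have := e_four (k + 1)
    have h5 : k + 4 + 1 = k + 1 + 4 := by omega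
    rw [h5, this]; linarith [h_pos]
  set t := x - (k : ℝ) / 8 with ht
  have f0 := Int.fract_nonneg t
  have f1 := Int.fract_lt_one t
  have ff : (⌊t⌋ : ℝ) + Int.fract t = t := Int.floor_add_fract t
  set f := Int.fract t
  set i := ⌊t⌋
  have go : ∀ (u : ℤ) (g : ℝ), 0 ≤ g → g ≤ 1 / 2 → (x - (u + (k : ℝ) / 8)) ^ 2 = g ^ 2 →
      (x - (i + ((k + 4 : ℕ) : ℝ) / 8)) ^ 2 = (1 / 2 - g) ^ 2 → cov (F k x y) := by
    intro u g g0 g1 q1 q2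
    rcases chord g (y - e k) g0 g1 (by linarith) (by linarith) with hc | hc
    · exact cov_row k u x y h1 h2 (by rw [q1]; exact hc)
    · rw [← F_four]
      refine cov_row (k + 4) i x y h1' h2' ?_
      rw [q2, h4]
      have : (y - (e k + h)) ^ 2 = (h - (y - e k)) ^ 2 := by ring
      rw [this]; exact hc
  rcases le_total f (1 / 2) with hf | hf
  · have hx : x = i + f + (k : ℝ) / 8 := by linarith
    refine go i f f0 hf ?_ ?_ <;> rw [hx] <;> push_cast <;> ring
  · have hx : x = i + f + (k : ℝ) / 8 := by linarith
    refine go (i + 1) (1 - f) (by linarith) (by linarith) ?_ ?_ <;> rw [hx] <;> push_cast <;> ring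

lemma cov_loop_pt (k i : ℕ) (x y : ℝ) (hi : i < 7)
    (hd : (x - lx i) ^ 2 + (y - ly i) ^ 2 ≤ 1) : cov (F k (e (k + 1) + x) (e k + y)) := by
  refine ⟨k, K k + i, by unfold L; omega, ?_⟩
  rw [P_loop]
  apply mem_of_F
  convert hd using 2 <;> ring

lemma cov_corner (k : ℕ) (x y : ℝ) (x0 : 0 ≤ x) (x1 : x ≤ h) (y0 : 0 ≤ y) (y1 : y ≤ h) :
    cov (F k (e (k + 1) + x) (e k + y)) := by
  have hl := h_lt
  rcases le_total x (0.934) with hx | hx <;> rcases le_total y (0.934) with hy | hy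
  · rcases le_total x y with hxy | hxy
    · refine cov_loop_pt k 6 x y (by norm_num) ?_
      simp only [lx, ly]; nlinarith
    · refine cov_loop_pt k 1 x y (by norm_num) ?_
      simp only [lx, ly]; nlinarith
  · refine cov_loop_pt k 5 x y (by norm_num) ?_
    simp only [lx, ly]; nlinarith
  · refine cov_loop_pt k 2 x y (by norm_num) ?_
    simp only [lx, ly]; nlinarith
  · rcases le_total x y with hxy | hxy
    · refine cov_loop_pt k 4 x y (by norm_num) ?_
      simp only [lx, ly]; nlinarith
    · refine cov_loop_pt k 3 x y (by norm_num) ?_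
      simp only [lx, ly]; nlinarith

lemma cov_Q (k : ℕ) : ∀ x y : ℝ, -e (k + 2) ≤ x → x ≤ e k → -e (k + 1) ≤ y → y ≤ e (k + 3) →
    cov (F (k + 3) x y) := by
  induction k with
  | zero =>
    intro x y x1 x2 y1 y2
    rw [F_succ' (0 + 3), show 0 + 3 + 1 = 0 + 4 from rfl, F_four]
    refine cov_row 0 (round (-y)) _ _ (by simpa [S] using y2) (by simp at y1 ⊢; linarith) ?_
    have q := abs_sub_round (-y)
    have q2 : |x - e 0| ≤ 1 / 2 := by
      have := h_lt
      have := h_pos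
      simp only [e] at *
      push_cast at *
      rw [abs_le]; constructor <;> linarith
    have q3 := sq_le_sq' (neg_le_of_abs_le q) (le_of_abs_le q)
    have q4 := sq_le_sq' (neg_le_of_abs_le q2) (le_of_abs_le q2)
    simp only [Nat.cast_zero, zero_div, add_zero]
    linarith
  | succ k ih =>
    intro x y x1 x2 y1 y2
    rcases le_total y (e k) with hy | hy
    · rw [show k + 1 + 3 = k + 3 + 1 by ring, F_succ]
      refine ih y (-x) (by convert y1 using 2) hy (by linarith) ?_
      have : e (k + 1 + 2) = e (k + 3) := rfl
      linarith
    · rw [show k + 1 + 3 = k + 4 by ring, F_four]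
      rcases le_total (S k) x with hx | hx
      · exact cov_pair k x y hx (by exact x1) x2 hy y2
      · cases k with
        | zero =>
          have : S 0 = -e (0 + 1 + 2) := rfl
          have : x = S 0 := by linarith
          exact cov_pair 0 x y this.ge x1 x2 hy y2
        | succ k =>
          rw [F_succ]
          have q1 : S (k + 1) = - e k := rfl
          have q2 : e (k + 1 + 1 + 3) = e (k + 1) + h := e_four (k + 1)
          have q3 : e (k + 1 + 1 + 2) = e k + h := e_four k
          have := cov_corner k (y - e (k + 1)) (-x - e k) (by linarith) (by linarith)
            (by linarith) (by linarith)
          convert this using 2 <;> ring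

lemma cov_all (p : Pt) : cov p := by
  obtain ⟨k, hk⟩ := exists_nat_gt ((|p 0| + |p 1|) * 4 + 1)
  have hb : ∀ i, |p 0| + |p 1| ≤ e (k + i) := by
    intro i
    have := h_gt
    have : (0 : ℝ) ≤ i := by positivity
    have := abs_nonneg (p 0)
    have := abs_nonneg (p 1)
    unfold e; push_cast
    nlinarith
  have hp : p = F (k + 3) ((cs (k + 3)).1 * p 0 - (cs (k + 3)).2 * p 1)
      ((cs (k + 3)).2 * p 0 + (cs (k + 3)).1 * p 1) := by
    have := cs_sq (k + 3)
    ext i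
    fin_cases i
    · simp only [Fin.zero_eta, F_zero]; linear_combination (- p 0) * this
    · simp only [Fin.mk_one, F_one]; linear_combination (- p 1) * this
  rw [hp]
  have b0 := hb 0
  have b1 := hb 1
  have b2 := hb 2
  have b3 := hb 3
  rw [add_zero] at b0
  have := abs_nonneg (p 0)
  have := abs_nonneg (p 1)
  have := le_abs_self (p 0)
  have := neg_abs_le (p 0)
  have := le_abs_self (p 1)
  have := neg_abs_le (p 1)
  apply cov_Q <;> rcases cs_or (k + 3) with ⟨h1, h2 | h2⟩ | ⟨h1, h2 | h2⟩ <;>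
    rw [h1, h2] <;> linarith

lemma C_cover : (⋃ n, closedBall (C n) 1) = Set.univ := by
  rw [Set.eq_univ_iff_forall]
  intro p
  obtain ⟨m, j, hj, hp⟩ := cov_all p
  rw [Set.mem_iUnion]
  exact ⟨T m + j, by rw [C_T m j hj]; exact hp⟩

/-! ### Counting -/

lemma ly_nonneg (i : ℕ) : 0 ≤ ly i := by
  unfold ly; split <;> norm_num

lemma P_far (m j : ℕ) (l : ℝ) (h0 : |P m j 0| < l) (h1 : |P m j 1| < l) : e m < l := by
  have := ly_nonneg (j - K m)
  unfold P at h0 h1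
  rw [F_zero] at h0
  rw [F_one] at h1
  rw [abs_lt] at h0 h1
  rcases cs_or m with ⟨q1, q2 | q2⟩ | ⟨q1, q2 | q2⟩ <;> rw [q1, q2] at h0 h1 <;> linarith

lemma L_le (m : ℕ) : (L m : ℝ) ≤ h * m / 2 + 20 := by
  have h1 := K_lt m
  have h2 := a_gt m
  have h3 := h_lt
  have h4 := h_pos
  unfold L; push_cast
  cases m with
  | zero => simp only [S, e] at *; push_cast at *; linarith
  | succ m => simp only [S, e] at *; push_cast at *; linarith

lemma T_le (m : ℕ) : (T m : ℝ) ≤ h * m ^ 2 / 4 + 20 * m := by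
  induction m with
  | zero => simp [T]
  | succ m ih =>
    rw [T_succ]; push_cast
    have := L_le m
    have := h_pos
    nlinarith

lemma count_le (l : ℝ) (hl : 0 < l) :
    Ncount C l ≤ ENNReal.ofReal (h * (4 * (l + 1) / h + 2) ^ 2 / 4 + 20 * (4 * (l + 1) / h + 2)) := by
  have hp := h_pos
  set M := ⌈4 * (l + 1) / h + 1 / 2⌉₊ with hM
  have hsub : {i | (closedBall (C i) 1 ∩ openSquare l).Nonempty} ⊆ ((Finset.range (T M) : Finset ℕ) : Set ℕ) := by
    rintro n ⟨q, hq1, hq2⟩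
    obtain ⟨s1, s2⟩ := st_spec n
    have hc : ∀ i, |C n i| ≤ |q i| + 1 := by
      intro i
      rw [mem_closedBall, dist_eq_norm] at hq1
      have := PiLp.norm_apply_le (q - C n) i
      rw [PiLp.sub_apply, Real.norm_eq_abs] at this
      have := abs_sub_abs_le_abs_sub (C n i) (q i)
      rw [abs_sub_comm] at this
      linarith
    have hf : e (st n).1 < l + 1 :=
      P_far _ (st n).2 _ (by have := hc 0; have := hq2.1; unfold C at *; linarith)
        (by have := hc 1; have := hq2.2; unfold C at *; linarith)
    have hm : (st n).1 < M := by
      rw [hM, Nat.lt_ceil]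
      have : ((st n).1 : ℝ) - 1 / 2 < 4 * (l + 1) / h := by
        rw [lt_div_iff₀ hp]
        unfold e at hf
        linarith
      linarith
    have := T_mono (Nat.succ_le_of_lt hm)
    rw [Nat.succ_eq_add_one, T_succ] at this
    simp only [Finset.coe_range, Set.mem_Iio]; omega
  have hcard : Ncount C l ≤ (T M : ℝ≥0∞) := by
    have := Set.encard_le_encard hsub
    rw [Set.encard_coe_eq_coe_finsetCard, Finset.card_range] at this
    unfold Ncount
    exact_mod_cast this
  refine hcard.trans ?_
  rw [← ENNReal.ofReal_natCast]
  apply ENNReal.ofReal_le_ofReal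
  refine (T_le M).trans ?_
  have hMle : (M : ℝ) ≤ 4 * (l + 1) / h + 2 := by
    have := Nat.ceil_lt_add_one (show 0 ≤ 4 * (l + 1) / h + 1 / 2 by positivity)
    linarith
  gcongr

lemma lim_aux : Tendsto (fun l : ℝ => (h * (4 * (l + 1) / h + 2) ^ 2 / 4 + 20 * (4 * (l + 1) / h + 2)) * π
    / (4 * l ^ 2)) atTop (nhds (2 * π / (2 + Real.sqrt 3))) := by
  have hp := h_pos
  have t0 : Tendsto (fun l : ℝ => l⁻¹) atTop (nhds 0) := tendsto_inv_atTop_zero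
  have t1 : Tendsto (fun l : ℝ => 4 / h + (4 / h + 2) * l⁻¹) atTop (nhds (4 / h + (4 / h + 2) * 0)) :=
    tendsto_const_nhds.add (tendsto_const_nhds.mul t0)
  have t2 := (((t1.pow 2).const_mul (h / 4)).add ((t1.mul t0).const_mul 20)).mul_const (π / 4)
  have e1 : (h / 4 * (4 / h + (4 / h + 2) * 0) ^ 2 + 20 * ((4 / h + (4 / h + 2) * 0) * 0)) * (π / 4)
      = 2 * π / (2 + Real.sqrt 3) := by
    have : 2 + Real.sqrt 3 = 2 * h := by unfold h; ring
    rw [this]; field_simp; ring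
  rw [e1] at t2
  refine t2.congr' ?_
  filter_upwards [eventually_gt_atTop 0] with l hl
  field_simp
  ring

lemma C_density : Filter.limsup
          (fun l : ℝ => Ncount C l * ENNReal.ofReal π / ENNReal.ofReal (4 * l ^ 2))
          Filter.atTop ≤ ENNReal.ofReal (2 * π / (2 + Real.sqrt 3)) := by
  have ht := (ENNReal.tendsto_ofReal lim_aux)
  rw [← ht.limsup_eq]
  apply Filter.limsup_le_limsup
  · filter_upwards [eventually_gt_atTop 0] with l hl
    have hp := h_pos
    rw [ENNReal.ofReal_div_of_pos (by positivity),
      ENNReal.ofReal_mul (q := π) (by positivity)]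
    exact ENNReal.div_le_div_right (mul_le_mul_left (count_le l hl) _) _
  · isBoundedDefault
  · isBoundedDefault

end Spiral

/-- There is a sequence covering of the plane by unit disks, each disk containing the center of
the next and with no turn sharper than `2π/3`, whose upper density is at most `2π/(2+√3)`. -/
theorem exists_seq_covering_density_le :
    ∃ C : ℕ → Pt,
      (⋃ n, closedBall (C n) 1) = Set.univ ∧
      (∀ n, 1 ≤ n → 0 < dist (C n) (C (n - 1)) ∧ dist (C n) (C (n - 1)) ≤ 1) ∧
      (∀ n, 1 ≤ n → 2 * π / 3 ≤ EuclideanGeometry.angle (C (n - 1)) (C n) (C (n + 1))) ∧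
      Filter.limsup
          (fun l : ℝ => Ncount C l * ENNReal.ofReal π / ENNReal.ofReal (4 * l ^ 2))
          Filter.atTop ≤ ENNReal.ofReal (2 * π / (2 + Real.sqrt 3)) := by
  refine ⟨Spiral.C, Spiral.C_cover, ?_, ?_, Spiral.C_density⟩
  · intro n hn
    obtain ⟨k, rfl⟩ := Nat.exists_eq_add_of_le' hn
    exact Spiral.C_dist k
  · intro n hn
    obtain ⟨k, rfl⟩ := Nat.exists_eq_add_of_le' hn
    exact Spiral.C_angle k
end
end
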